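/- arXiv:0712.2153 — 4 statements merged into one kernel-verified Lean document; each statement's English description precedes it below -/
import Mathlib

section
/- Let n ≥ 7 and let ψ : B_n → Sym_{2n} be any homomorphism. Then at least one of the following holds: (a) ψ is cyclic; (b) ψ is conjugate to ρ_S × cycl_w for some w ∈ Sym_n; (c) ψ is conjugate to ρ_S × ρ_S; (d) ψ is conjugate to ρ_{Lj} for some j ∈ {1, 2, 3}. -/
/-- The braid relations on `n-1` generators; generator `i : Fin (n-1)` stands for the
Artin generator `σ_{i+1}` (so the indexing is 0-based). The relations are
`σ_i σ_j = σ_j σ_i` for `|i-j| ≥ 2` and `σ_i σ_j σ_i = σ_j σ_i σ_j` for `|i-j| = 1`. -/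
def braidRels (n : ℕ) : Set (FreeGroup (Fin (n - 1))) :=
  { r | ∃ i j : Fin (n - 1), ((i : ℕ) + 2 ≤ (j : ℕ) ∨ (j : ℕ) + 2 ≤ (i : ℕ)) ∧
      r = FreeGroup.of i * FreeGroup.of j * (FreeGroup.of j * FreeGroup.of i)⁻¹ } ∪
  { r | ∃ i j : Fin (n - 1), (j : ℕ) = (i : ℕ) + 1 ∧
      r = FreeGroup.of i * FreeGroup.of j * FreeGroup.of i *
          (FreeGroup.of j * FreeGroup.of i * FreeGroup.of j)⁻¹ }

/-- The braid group `B_n`, given by the Artin presentation. -/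
abbrev BraidGroup (n : ℕ) := PresentedGroup (braidRels n)

/-- The Artin generator `σ_{i+1}` of the braid group `B_n`, for `i : Fin (n-1)`. -/
def σ {n : ℕ} (i : Fin (n - 1)) : BraidGroup n := PresentedGroup.of i

/-- A homomorphism to the symmetric group `Sym_k = Perm (Fin k)` is transitive if its
image acts transitively on the `k` points. -/
def IsTransitiveHom {G : Type*} [Group G] {k : ℕ} (φ : G →* Equiv.Perm (Fin k)) : Prop :=
  ∀ x y : Fin k, ∃ g : G, φ g x = y

/-- A homomorphism from `B_n` is cyclic if it sends all the generators `σ_1, …, σ_{n-1}`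
to a single element. -/
def IsCyclicHom {n : ℕ} {H : Type*} [Group H] (ψ : BraidGroup n →* H) : Prop :=
  ∀ i j : Fin (n - 1), ψ (σ i) = ψ (σ j)

/-- The image of the generator `σ_{i+1}` under the standard homomorphism
`ρ_S : B_k → Sym_k`: the transposition of the 0-based points `i` and `i+1`
(that is, of the 1-based points `i+1` and `i+2`). -/
def stdGen (k : ℕ) (i : Fin (k - 1)) : Equiv.Perm (Fin k) :=
  Equiv.swap ⟨i, by have := i.isLt; omega⟩ ⟨(i : ℕ) + 1, by have := i.isLt; omega⟩

/-- The transposition `(j, n+j)` (0-based) in `Sym_{2n}`. -/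
def tw (n : ℕ) (j : Fin n) : Equiv.Perm (Fin (2 * n)) :=
  Equiv.swap ⟨j, by have := j.isLt; omega⟩ ⟨n + j, by have := j.isLt; omega⟩

/-- The 4-cycle `(a, b, c, d)` sending `a ↦ b ↦ c ↦ d ↦ a` (for pairwise distinct
points), written as the product of transpositions `(a d)(a c)(a b)`. -/
def cyc4 {m : ℕ} (a b c d : Fin m) : Equiv.Perm (Fin m) :=
  Equiv.swap a d * Equiv.swap a c * Equiv.swap a b

/-- `ρ_{L1}(σ_{i+1})`: the 4-cycle `(i, n+i+1, n+i, i+1)` on the 0-based points of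
`Sym_{2n}`, for `i : Fin (n-1)`. -/
def linL1Gen (n : ℕ) (i : Fin (n - 1)) : Equiv.Perm (Fin (2 * n)) :=
  cyc4 ⟨i, by have := i.isLt; omega⟩ ⟨n + i + 1, by have := i.isLt; omega⟩
    ⟨n + i, by have := i.isLt; omega⟩ ⟨(i : ℕ) + 1, by have := i.isLt; omega⟩

/-- The product `∏_{j < i} (j, n+j)` (0-based) in `Sym_{2n}`. -/
def lowTw (n : ℕ) (i : Fin (n - 1)) : Equiv.Perm (Fin (2 * n)) :=
  ((List.finRange n).map (fun j : Fin n => if (j : ℕ) < (i : ℕ) then tw n j else 1)).prod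

/-- The product `∏_{j ≥ i+2} (j, n+j)` (0-based) in `Sym_{2n}`. -/
def highTw (n : ℕ) (i : Fin (n - 1)) : Equiv.Perm (Fin (2 * n)) :=
  ((List.finRange n).map (fun j : Fin n => if (i : ℕ) + 2 ≤ (j : ℕ) then tw n j else 1)).prod

/-- `ρ_{L2}(σ_{i+1}) = ∏_{j<i}(j, n+j) · (i, n+i+1, n+i, i+1) · ∏_{j≥i+2}(j, n+j)`
(0-based) in `Sym_{2n}`. -/
def linL2Gen (n : ℕ) (i : Fin (n - 1)) : Equiv.Perm (Fin (2 * n)) :=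
  lowTw n i * linL1Gen n i * highTw n i

/-- `ρ_{L3}(σ_{i+1}) = ∏_{j<i}(j, n+j) · (i, n+i+1)(i+1, n+i) · ∏_{j≥i+2}(j, n+j)`
(0-based) in `Sym_{2n}`. -/
def linL3Gen (n : ℕ) (i : Fin (n - 1)) : Equiv.Perm (Fin (2 * n)) :=
  lowTw n i *
    (Equiv.swap ⟨i, by have := i.isLt; omega⟩ ⟨n + i + 1, by have := i.isLt; omega⟩ *
     Equiv.swap ⟨(i : ℕ) + 1, by have := i.isLt; omega⟩ ⟨n + i, by have := i.isLt; omega⟩) *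
  highTw n i

/-- The block-diagonal permutation of `Fin (2n)` acting as `p` on the first `n` points
and as `j ↦ n + q (j - n)` on the last `n` points. The value of the product
homomorphism `φ₁ × φ₂ : G → Sym_{2n}` of `φ₁, φ₂ : G → Sym_n` at `g` is
`dbl n (φ₁ g) (φ₂ g)`. -/
def dbl (n : ℕ) (p q : Equiv.Perm (Fin n)) : Equiv.Perm (Fin (2 * n)) :=
  (finSumFinEquiv.trans (finCongr (two_mul n).symm)).permCongr (Equiv.sumCongr p q)

/-! ### Part 1: braid sequences and Artin's small theorem -/

def Br {G : Type*} [Group G] (m : ℕ) (s : ℕ → G) : Prop :=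
  (∀ i j, i + 2 ≤ j → j < m → s i * s j = s j * s i) ∧
  (∀ i, i + 1 < m → s i * s (i+1) * s i = s (i+1) * s i * s (i+1))

theorem Br.map {G H : Type*} [Group G] [Group H] (f : G →* H) {m : ℕ} {s : ℕ → G} (h : Br m s) :
    Br m (fun i => f (s i)) := by
  refine ⟨fun i j hij hj => ?_, fun i hi => ?_⟩
  · simpa using congrArg f (h.1 i j hij hj)
  · simpa using congrArg f (h.2 i hi)

theorem eq_of_braid_comm {G : Type*} [Group G] {a b : G} (h1 : a * b * a = b * a * b)
    (h2 : a * b = b * a) : a = b := by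
  rw [h2] at h1
  have : b * a * a = b * a * b := h1
  exact mul_left_cancel this

theorem Br.cyc {G : Type*} [Group G] {m : ℕ} {s : ℕ → G} (h : Br m s) {i : ℕ} (hi : i + 1 < m)
    (he : s i = s (i+1)) : ∀ j k, j < m → k < m → s j = s k := by
  have up : ∀ d, i + d + 1 < m → s (i + d) = s (i + d + 1) := by
    intro d
    induction d with
    | zero => intro _; simpa using he
    | succ d ih =>
      intro hd
      have e := ih (by omega)
      have c := h.1 (i + d) (i + d + 2) (by omega) (by omega)
      have b := h.2 (i + d + 1) (by omega)
      rw [e] at c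
      exact eq_of_braid_comm b c
  have dn : ∀ d, d ≤ i → s (i - d) = s (i - d + 1) := by
    intro d
    induction d with
    | zero => intro _; simpa using he
    | succ d ih =>
      intro hd
      have e := ih (by omega)
      have c := h.1 (i - (d+1)) (i - (d+1) + 2) (by omega) (by omega)
      have b := h.2 (i - (d+1)) (by omega)
      have e1 : i - d = i - (d+1) + 1 := by omega
      rw [e1] at e
      have e2 : i - (d+1) + 1 + 1 = i - (d+1) + 2 := by omega
      rw [e2] at e
      rw [← e] at c
      exact eq_of_braid_comm b c
  have adj : ∀ j, j + 1 < m → s j = s (j+1) := by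
    intro j hj
    rcases le_total i j with h' | h'
    · have := up (j - i) (by omega)
      rwa [show i + (j - i) = j by omega] at this
    · have := dn (i - j) (by omega)
      rwa [show i - (i - j) = j by omega] at this
  have all0 : ∀ j, j < m → s j = s 0 := by
    intro j
    induction j with
    | zero => intro _; rfl
    | succ j ih => intro hj; rw [← adj j hj]; exact ih (by omega)
  intro j k hj hk
  rw [all0 j hj, all0 k hk]

theorem Br.one {G : Type*} [Group G] {m : ℕ} {s : ℕ → G} (h : Br m s) {i : ℕ} (hi : i < m)
    (he : s i = 1) : ∀ j k, j < m → k < m → s j = s k := by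
  by_cases h1 : i + 1 < m
  · refine h.cyc h1 ?_
    have := h.2 i h1
    rw [he] at this ⊢
    exact (by simpa using this : s (i+1) = 1).symm
  · rcases i with _ | i
    · intro j k hj hk
      have : j = k := by omega
      rw [this]
    · refine h.cyc hi ?_
      have := h.2 i hi
      rw [he] at this ⊢
      simpa using this

def trunc {G : Type*} [Group G] (m : ℕ) (s : ℕ → G) (i : ℕ) : G := if i < m then s i else 1

theorem Br.trunc {G : Type*} [Group G] {m : ℕ} {s : ℕ → G} (h : Br m s) : Br m (trunc m s) := by
  refine ⟨fun i j hij hj => ?_, fun i hi => ?_⟩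
  · simp only [_root_.trunc, hj, if_true, show i < m by omega]; exact h.1 i j hij hj
  · simp only [_root_.trunc, hi, if_true, show i < m by omega]; exact h.2 i hi

theorem Br.shift {G : Type*} [Group G] {m : ℕ} {s : ℕ → G} (h : Br m s) (d k : ℕ) (hk : k + d ≤ m) :
    Br k (fun i => s (i + d)) := by
  refine ⟨fun i j hij hj => h.1 _ _ (by omega) (by omega), fun i hi => ?_⟩
  have := h.2 (i + d) (by omega)
  rwa [show i + d + 1 = i + 1 + d by omega] at this

def CycOn (m : ℕ) (Y : Type) : Prop :=
  ∀ t : ℕ → Equiv.Perm Y, Br m t → ∀ i j, i < m → j < m → t i = t j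

/-- Restriction of a braid sequence to an invariant subset. -/
theorem restr_cyc {Y : Type} (p : Y → Prop) {m : ℕ} (hC : CycOn m {y // p y}) (t : ℕ → Equiv.Perm Y)
    (ht : Br m t) (hp : ∀ i y, p (t i y) ↔ p y) : ∀ i j, i < m → j < m → ∀ y, p y → t i y = t j y := by
  intro i j hi hj y hy
  have := hC (fun i => (t i).subtypePerm (hp i)) ?_ i j hi hj
  · have := congrArg (fun e => ((e ⟨y, hy⟩ : {y // p y}) : Y)) this
    simpa using this
  · refine ⟨fun i j hij hj => ?_, fun i hi => ?_⟩
    · ext y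
      exact congrArg (fun e => e (y : Y)) (ht.1 i j hij hj)
    · ext y
      exact congrArg (fun e => e (y : Y)) (ht.2 i hi)

theorem pres_comm {Y : Type} (a x y : Equiv.Perm Y) (hx : Commute a x) (hy : Commute a y)
    (px : ∀ p, a.SameCycle p (x p)) (py : ∀ p, a.SameCycle p (y p)) : x * y = y * x := by
  ext p
  obtain ⟨k, hk⟩ := px p
  obtain ⟨l, hl⟩ := py p
  have h1 : x * a ^ l = a ^ l * x := (hx.zpow_left l).eq.symm
  have h2 : y * a ^ k = a ^ k * y := (hy.zpow_left k).eq.symm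
  have h1' := congrArg (fun e => e p) h1
  have h2' := congrArg (fun e => e p) h2
  simp only [Equiv.Perm.mul_apply] at h1' h2' ⊢
  rw [← hl, ← hk, h1', h2', ← hk, ← hl]
  simp only [← Equiv.Perm.mul_apply, ← zpow_add]
  rw [add_comm]

theorem sameCycle_map {Y : Type} {a x : Equiv.Perm Y} (hx : Commute a x) (p q : Y) :
    a.SameCycle (x p) (x q) ↔ a.SameCycle p q := by
  constructor
  · rintro ⟨k, hk⟩
    refine ⟨k, ?_⟩
    have h := congrArg (fun e => e p) (hx.zpow_left k).eq
    simp only [Equiv.Perm.mul_apply] at h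
    rw [h] at hk
    exact x.injective hk
  · rintro ⟨k, hk⟩
    refine ⟨k, ?_⟩
    have h := congrArg (fun e => e p) (hx.zpow_left k).eq
    simp only [Equiv.Perm.mul_apply] at h
    rw [h, hk]

theorem quot_same {Y : Type} {m : ℕ} (a : Equiv.Perm Y)
    (hA : CycOn m (Quotient (Equiv.Perm.SameCycle.setoid a)))
    (t : ℕ → Equiv.Perm Y) (ht : Br m t) (hc : ∀ i, Commute a (t i)) :
    ∀ i j, i < m → j < m → ∀ p, a.SameCycle (t i p) (t j p) := by
  intro i j hi hj p
  let q : ℕ → Equiv.Perm (Quotient (Equiv.Perm.SameCycle.setoid a)) := fun i =>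
    Quotient.congr (t i) (fun p q => (sameCycle_map (hc i) p q).symm)
  have hq : Br m q := by
    refine ⟨fun i j hij hj => ?_, fun i hi => ?_⟩
    · ext x
      induction x using Quotient.inductionOn with
      | h x =>
        have := congrArg (fun e => e x) (ht.1 i j hij hj)
        simp only [Equiv.Perm.mul_apply] at this
        simp only [Equiv.Perm.mul_apply, q, Quotient.congr_mk, this]
    · ext x
      induction x using Quotient.inductionOn with
      | h x =>
        have := congrArg (fun e => e x) (ht.2 i hi)
        simp only [Equiv.Perm.mul_apply] at this
        simp only [Equiv.Perm.mul_apply, q, Quotient.congr_mk, this]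
  have := congrArg (fun e => e (Quotient.mk _ p)) (hA q hq i j hi hj)
  simp only [q, Quotient.congr_mk] at this
  exact Quotient.exact this

theorem div_pres {Y : Type} {a x y : Equiv.Perm Y} (h : ∀ p, a.SameCycle (x p) (y p)) (p : Y) :
    a.SameCycle p ((x * y⁻¹) p) := by
  have := h (y⁻¹ p)
  rw [show y (y⁻¹ p) = p from y.apply_symm_apply p] at this
  exact this.symm

theorem quot_cyc {Y : Type} {m : ℕ} (hm : 4 ≤ m) (a : Equiv.Perm Y)
    (hA : CycOn m (Quotient (Equiv.Perm.SameCycle.setoid a)))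
    (t : ℕ → Equiv.Perm Y) (ht : Br m t) (hc : ∀ i, Commute a (t i)) :
    ∀ i j, i < m → j < m → t i = t j := by
  have hs := quot_same a hA t ht hc
  have c23 : (t 2 * (t 0)⁻¹) * (t 3 * (t 0)⁻¹) = (t 3 * (t 0)⁻¹) * (t 2 * (t 0)⁻¹) :=
    pres_comm a _ _ ((hc 2).mul_right (hc 0).inv_right) ((hc 3).mul_right (hc 0).inv_right)
      (div_pres (hs 2 0 (by omega) (by omega))) (div_pres (hs 3 0 (by omega) (by omega)))
  have c02 : Commute (t 0)⁻¹ (t 2) := Commute.inv_left (ht.1 0 2 (by omega) (by omega))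
  have c03 : Commute (t 0)⁻¹ (t 3) := Commute.inv_left (ht.1 0 3 (by omega) (by omega))
  have e1 : (t 2 * (t 0)⁻¹) * (t 3 * (t 0)⁻¹) = (t 2 * t 3) * ((t 0)⁻¹ * (t 0)⁻¹) := by
    rw [mul_assoc, ← mul_assoc _ (t 3), c03.eq]; group
  have e2 : (t 3 * (t 0)⁻¹) * (t 2 * (t 0)⁻¹) = (t 3 * t 2) * ((t 0)⁻¹ * (t 0)⁻¹) := by
    rw [mul_assoc, ← mul_assoc _ (t 2), c02.eq]; group
  rw [e1, e2] at c23
  exact ht.cyc (i := 2) (by omega) (eq_of_braid_comm (ht.2 2 (by omega)) (mul_right_cancel c23))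

theorem card_quot {Y : Type} [Fintype Y] (a : Equiv.Perm Y) (k : ℕ)
    (h : ∀ y : Y, ∃ f : Fin k → Y, Function.Injective f ∧ ∀ i, a.SameCycle y (f i)) :
    k * Nat.card (Quotient (Equiv.Perm.SameCycle.setoid a)) ≤ Fintype.card Y := by
  classical
  let Q := Quotient (Equiv.Perm.SameCycle.setoid a)
  have : Fintype Q := Fintype.ofFinite _
  choose f hf1 hf2 using h
  let g : Fin k × Q → Y := fun z => f z.2.out z.1
  have hg : Function.Injective g := by
    rintro ⟨i, q⟩ ⟨j, r⟩ h
    simp only [g] at h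
    have h1 := hf2 q.out i
    have h2 := hf2 r.out j
    rw [h] at h1
    have h3 : a.SameCycle q.out r.out := h1.trans h2.symm
    have h4 : q = r := by
      rw [← Quotient.out_eq q, ← Quotient.out_eq r]; exact Quotient.sound h3
    subst h4
    have := hf1 _ h
    rw [this]
  have := Fintype.card_le_of_injective g hg
  rw [Fintype.card_prod, Fintype.card_fin] at this
  rw [Nat.card_eq_fintype_card]
  exact this

theorem cyc_of_card_two {Y : Type} [Finite Y] (h : Nat.card Y ≤ 2) (m : ℕ) : CycOn m Y := by
  classical
  intro t ht
  have key : ∀ x y : Equiv.Perm Y, x * y = y * x := by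
    have := Fintype.ofFinite Y
    rw [Nat.card_eq_fintype_card] at h
    have : ∃ e : Y ↪ Fin 2, True := by
      have := Function.Embedding.nonempty_of_card_le (α := Y) (β := Fin 2) (by simpa using h)
      exact ⟨this.some, trivial⟩
    obtain ⟨e, -⟩ := this
    intro x y
    apply Equiv.Perm.viaEmbeddingHom_injective e
    rw [map_mul, map_mul]
    have : ∀ u v : Equiv.Perm (Fin 2), u * v = v * u := by decide
    exact this _ _
  intro i j hi hj
  rcases Nat.lt_or_ge 1 m with h1 | h1
  · exact ht.cyc (i := 0) h1 (eq_of_braid_comm (ht.2 0 h1) (key _ _)) i j hi hj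
  · rw [show i = j by omega]

set_option maxRecDepth 100000 in
theorem dec3 : ∀ b c : Equiv.Perm (Fin 3), b*c*b=c*b*c → ∀ e, b*e=e*b → c*e*c=e*c*e → b = e := by
  decide +kernel

set_option maxRecDepth 100000 in
theorem dec4 : ∀ a : Equiv.Perm (Fin 4), a ≠ 1 → ∀ c, a*c=c*a → ∀ d, a*d=d*a →
    c*d*c=d*c*d → c = d := by decide +kernel

theorem exists_emb {Y : Type} [Finite Y] {k : ℕ} (h : Nat.card Y ≤ k) : Nonempty (Y ↪ Fin k) := by
  have := Fintype.ofFinite Y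
  rw [Nat.card_eq_fintype_card] at h
  exact Function.Embedding.nonempty_of_card_le (by simpa using h)

theorem art4 {Y : Type} [Finite Y] (h : Nat.card Y ≤ 4) : CycOn 4 Y := by
  classical
  intro t ht
  by_cases h0 : t 0 = 1
  · exact ht.one (by omega) h0
  obtain ⟨e⟩ := exists_emb h
  refine ht.cyc (i := 2) (by omega) ?_
  apply Equiv.Perm.viaEmbeddingHom_injective e
  have hm := ht.map (Equiv.Perm.viaEmbeddingHom e)
  refine dec4 _ ?_ _ (hm.1 0 2 (by omega) (by omega)) _ (hm.1 0 3 (by omega) (by omega))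
    (hm.2 2 (by omega))
  intro h1
  apply h0
  apply Equiv.Perm.viaEmbeddingHom_injective e
  rw [map_one]; exact h1

/-- Three generators acting by an abelian normal-type family. -/
theorem meta3 {G : Type*} [Group G] {x y z : G} (N : Subgroup G)
    (hN : ∀ u ∈ N, ∀ v ∈ N, u * v = v * u) (hnorm : ∀ u ∈ N, y * u * y⁻¹ ∈ N)
    (hx : x * y⁻¹ ∈ N) (hz : z * y⁻¹ ∈ N)
    (bxy : x * y * x = y * x * y) (byz : y * z * y = z * y * z) (cxz : x * z = z * x) : x = z := by
  obtain ⟨u, hu⟩ : ∃ u, u = x * y⁻¹ := ⟨_, rfl⟩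
  obtain ⟨v, hv⟩ : ∃ v, v = z * y⁻¹ := ⟨_, rfl⟩
  rw [← hu] at hx
  rw [← hv] at hz
  have ex : x = u * y := by rw [hu]; group
  have ez : z = v * y := by rw [hv]; group
  have hu1 := hnorm u hx
  have hv1 := hnorm v hz
  have hu2 := hnorm _ hu1
  have hv2 := hnorm _ hv1
  subst ex ez
  -- u θ²u = θ u
  obtain ⟨u1, e1⟩ : ∃ u1, u1 = y * u * y⁻¹ := ⟨_, rfl⟩
  obtain ⟨v1, f1⟩ : ∃ v1, v1 = y * v * y⁻¹ := ⟨_, rfl⟩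
  rw [← e1] at hu1 hu2
  rw [← f1] at hv1 hv2
  obtain ⟨u2, e2⟩ : ∃ u2, u2 = y * u1 * y⁻¹ := ⟨_, rfl⟩
  obtain ⟨v2, f2⟩ : ∃ v2, v2 = y * v1 * y⁻¹ := ⟨_, rfl⟩
  rw [← e2] at hu2
  rw [← f2] at hv2
  have A : u * u2 = u1 := by
    have : u * u2 * (y * y * y) = u1 * (y * y * y) := by
      rw [e2, e1]
      calc _ = u * y * y * (u * y) := by group
        _ = y * (u * y) * y := bxy
        _ = _ := by group
    exact mul_right_cancel this
  have B : v * v2 = v1 := by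
    have : v * v2 * (y * y * y) = v1 * (y * y * y) := by
      rw [f2, f1]
      calc _ = v * y * y * (v * y) := by group
        _ = y * (v * y) * y := byz.symm
        _ = _ := by group
    exact mul_right_cancel this
  have C : u * v1 = v * u1 := by
    have : u * v1 * (y * y) = v * u1 * (y * y) := by
      rw [f1, e1]
      calc _ = u * y * (v * y) := by group
        _ = v * y * (u * y) := cxz
        _ = _ := by group
    exact mul_right_cancel this
  have C1 : u1 * v2 = v1 * u2 := by
    calc _ = y * (u * v1) * y⁻¹ := by rw [f2, e1]; group
      _ = y * (v * u1) * y⁻¹ := by rw [C]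
      _ = _ := by rw [e2, f1]; group
  -- now in the abelian group N
  have key : u = v := by
    let U : N := ⟨u, hx⟩
    let V : N := ⟨v, hz⟩
    let U1 : N := ⟨u1, hu1⟩
    let V1 : N := ⟨v1, hv1⟩
    let U2 : N := ⟨u2, hu2⟩
    let V2 : N := ⟨v2, hv2⟩
    let : CommGroup N := { (inferInstance : Group N) with
      mul_comm := fun a b => Subtype.ext (hN _ a.2 _ b.2) }
    have A' : U * U2 = U1 := Subtype.ext A
    have B' : V * V2 = V1 := Subtype.ext B
    have C' : U * V1 = V * U1 := Subtype.ext C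
    have D' : U1 * V2 = V1 * U2 := Subtype.ext C1
    have : U = V := by
      have h1 : U1 * V2 * (U * V) = V1 * U2 * (U * V) := by rw [D']
      have h2 : U1 * U * (V * V2) = V1 * V * (U * U2) := by
        calc _ = U1 * V2 * (U * V) := by
              simp only [mul_comm, mul_left_comm, mul_assoc]
          _ = V1 * U2 * (U * V) := h1
          _ = _ := by simp only [mul_comm, mul_left_comm, mul_assoc]
      rw [A', B'] at h2
      have h3 : (U1 * V1) * U = (U1 * V1) * V := by
        calc _ = U1 * U * V1 := by simp only [mul_comm, mul_left_comm, mul_assoc]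
          _ = V1 * V * U1 := h2
          _ = _ := by simp only [mul_comm, mul_left_comm, mul_assoc]
      exact mul_left_cancel h3
    exact congrArg Subtype.val this
  rw [key]

theorem Br.cyc24 {G : Type*} [Group G] {m : ℕ} {s : ℕ → G} (h : Br m s) (hm : 5 ≤ m)
    (he : s 2 = s 4) : ∀ j k, j < m → k < m → s j = s k := by
  refine h.cyc (i := 1) (by omega) ?_
  refine eq_of_braid_comm (h.2 1 (by omega)) ?_
  have := h.1 1 4 (by omega) (by omega)
  rw [← he] at this; exact this

theorem fix_iff {Y : Type} {a g : Equiv.Perm Y} (h : Commute a g) (y : Y) : a (g y) = g y ↔ a y = y := by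
  have := congrArg (fun e => e y) h.eq
  simp only [Equiv.Perm.mul_apply] at this
  rw [this]
  exact g.injective.eq_iff

theorem card_nofix {Y : Type} [Finite Y] (a : Equiv.Perm Y) (h : ∀ y, a y ≠ y) :
    2 * Nat.card (Quotient (Equiv.Perm.SameCycle.setoid a)) ≤ Nat.card Y := by
  have := Fintype.ofFinite Y
  rw [Nat.card_eq_fintype_card (α := Y)]
  refine card_quot a 2 (fun y => ⟨![y, a y], ?_, ?_⟩)
  · intro i j hij
    fin_cases i <;> fin_cases j <;> simp_all
    exact h y hij.symm
  · intro i
    fin_cases i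
    · exact Equiv.Perm.SameCycle.refl _ _
    · exact ⟨1, by simp⟩

theorem card_big {Y : Type} [Finite Y] (a : Equiv.Perm Y) (h : ∀ y, a y ≠ y ∧ a (a y) ≠ y) :
    3 * Nat.card (Quotient (Equiv.Perm.SameCycle.setoid a)) ≤ Nat.card Y := by
  have := Fintype.ofFinite Y
  rw [Nat.card_eq_fintype_card (α := Y)]
  refine card_quot a 3 (fun y => ⟨![y, a y, a (a y)], ?_, ?_⟩)
  · intro i j hij
    have h1 := (h y).1
    have h2 := (h y).2
    have h3 : a (a y) ≠ a y := fun h' => h1 (a.injective h')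
    clear h
    fin_cases i <;> fin_cases j
    · rfl
    · exact absurd hij.symm h1
    · exact absurd hij.symm h2
    · exact absurd hij h1
    · rfl
    · exact absurd hij.symm h3
    · exact absurd hij h2
    · exact absurd hij h3
    · rfl
  · intro i
    fin_cases i
    · exact Equiv.Perm.SameCycle.refl _ _
    · exact ⟨1, by simp⟩
    · exact ⟨2, rfl⟩

theorem restr_br {Y : Type} (p : Y → Prop) {m : ℕ} (t : ℕ → Equiv.Perm Y)
    (ht : Br m t) (hp : ∀ i y, p (t i y) ↔ p y) : Br m (fun i => (t i).subtypePerm (hp i)) := by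
  refine ⟨fun i j hij hj => ?_, fun i hi => ?_⟩
  · ext y
    exact congrArg (fun e => e (y : Y)) (ht.1 i j hij hj)
  · ext y
    exact congrArg (fun e => e (y : Y)) (ht.2 i hi)

theorem restr_comm {Y : Type} (p : Y → Prop) {a b : Equiv.Perm Y} (h : Commute a b)
    (ha : ∀ y, p (a y) ↔ p y) (hb : ∀ y, p (b y) ↔ p y) :
    Commute (a.subtypePerm ha) (b.subtypePerm hb) := by
  ext y
  exact congrArg (fun e => e (y : Y)) h.eq

theorem trunc_comm {G : Type*} [Group G] {m : ℕ} {a : G} {t : ℕ → G}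
    (h : ∀ i, i < m → Commute a (t i)) (i : ℕ) : Commute a (trunc m t i) := by
  unfold trunc
  split_ifs with h1
  · exact h i h1
  · exact Commute.one_right a

theorem moved_cyc {Y : Type} [Finite Y] {m : ℕ} (hm : 4 ≤ m) (a : Equiv.Perm Y)
    (hA : ∀ Z : Type, Finite Z → 2 * Nat.card Z ≤ Nat.card Y → CycOn m Z)
    (t : ℕ → Equiv.Perm Y) (ht : Br m t) (hc : ∀ i, Commute a (t i)) :
    ∀ i j, i < m → j < m → ∀ y, a y ≠ y → t i y = t j y := by
  intro i j hi hj y hy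
  let p : Y → Prop := fun y => a y ≠ y
  have hp : ∀ i y, p (t i y) ↔ p y := fun i y => not_congr (fix_iff (hc i) y)
  have hpa : ∀ y, p (a y) ↔ p y := fun y => not_congr (fix_iff (Commute.refl a) y)
  have h1 := quot_cyc hm (a.subtypePerm hpa) (hA _ inferInstance ?_) _ (restr_br p t ht hp)
    (fun i => restr_comm p (hc i) hpa (hp i)) i j hi hj
  · exact congrArg (fun e => ((e ⟨y, hy⟩ : {y // p y}) : Y)) h1
  · refine (card_nofix _ ?_).trans ?_
    · rintro ⟨z, hz⟩ h
      exact hz (congrArg Subtype.val h)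
    · exact Nat.card_le_card_of_injective _ Subtype.val_injective

theorem big_agree {Y : Type} [Finite Y] {m : ℕ} (hm : 4 ≤ m) (a : Equiv.Perm Y)
    (hA : ∀ Z : Type, Finite Z → Nat.card Z ≤ m → CycOn m Z)
    (hcard : Nat.card Y < 3 * (m + 1))
    (t : ℕ → Equiv.Perm Y) (ht : Br m t) (hc : ∀ i, i < m → Commute a (t i)) :
    ∀ i j, i < m → j < m → ∀ y, a y ≠ y → a (a y) ≠ y → t i y = t j y := by
  intro i j hi hj y hy hy2
  have hc' : ∀ i, Commute a (trunc m t i) := trunc_comm hc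
  let p : Y → Prop := fun y => a y ≠ y ∧ a (a y) ≠ y
  have hg : ∀ g : Equiv.Perm Y, Commute a g → ∀ y, p (g y) ↔ p y := by
    intro g hg y
    have h2 := fix_iff (a := a * a) (hg.mul_left hg) y
    exact and_congr (not_congr (fix_iff hg y)) (not_congr h2)
  have hp : ∀ i y, p (trunc m t i y) ↔ p y := fun i y => hg _ (hc' i) y
  have hpa : ∀ y, p (a y) ↔ p y := fun y => hg a (Commute.refl a) y
  have h1 := quot_cyc hm (a.subtypePerm hpa) (hA _ inferInstance ?_) _ (restr_br p _ ht.trunc hp)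
    (fun i => restr_comm p (hc' i) hpa (hp i)) i j hi hj
  · have := congrArg (fun e => ((e ⟨y, hy, hy2⟩ : {y // p y}) : Y)) h1
    simpa [trunc, hi, hj] using this
  · have h3 : 3 * Nat.card (Quotient (Equiv.Perm.SameCycle.setoid (a.subtypePerm hpa))) ≤ _ :=
      card_big _ (by
        rintro ⟨z, hz, hz2⟩
        exact ⟨fun h => hz (congrArg Subtype.val h), fun h => hz2 (congrArg Subtype.val h)⟩)
    have h4 : Nat.card {y // p y} ≤ Nat.card Y :=
      Nat.card_le_card_of_injective _ Subtype.val_injective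
    omega

theorem card_fix_le {Y : Type} [Finite Y] (a : Equiv.Perm Y) (ha : a ≠ 1) :
    Nat.card {y // a y = y} + 2 ≤ Nat.card Y := by
  classical
  have := Fintype.ofFinite Y
  rw [Nat.card_eq_fintype_card, Nat.card_eq_fintype_card]
  have h1 := Fintype.card_subtype_compl (fun y => a y = y)
  have h3 : Fintype.card {y // a y = y} ≤ Fintype.card Y := Fintype.card_subtype_le _
  have h2 : 2 ≤ Fintype.card {y // ¬ a y = y} := by
    obtain ⟨y, hy⟩ : ∃ y, a y ≠ y := by
      by_contra! h
      exact ha (Equiv.ext h)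
    have : 1 < Fintype.card {y // ¬ a y = y} := by
      rw [Fintype.one_lt_card_iff]
      exact ⟨⟨y, hy⟩, ⟨a y, fun h => hy (a.injective h)⟩, fun h => hy (congrArg Subtype.val h).symm⟩
    omega
  omega

theorem art5 {Y : Type} [Finite Y] (h : Nat.card Y ≤ 5) : CycOn 5 Y := by
  classical
  intro t ht
  by_cases h0 : t 0 = 1
  · exact ht.one (by omega) h0
  refine ht.cyc24 (by omega) ?_
  set a := t 0 with ha
  have hb : Br 3 (fun i => t (i + 2)) := ht.shift 2 3 (by omega)
  have hbt := hb.trunc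
  have hc : ∀ i, Commute a (trunc 3 (fun i => t (i+2)) i) :=
    trunc_comm (fun i hi => ht.1 0 (i+2) (by omega) (by omega))
  have hfix : ∀ y, a y = y → t 2 y = t 4 y := by
    intro y hy
    let p : Y → Prop := fun y => a y = y
    have hr := restr_br p _ hbt (fun i y => fix_iff (hc i) y)
    have hcard := card_fix_le a h0
    obtain ⟨e⟩ := exists_emb (Y := {y // p y}) (k := 3) (by simp only [p]; omega)
    have hm := hr.map (Equiv.Perm.viaEmbeddingHom e)
    have := dec3 _ _ (hm.2 0 (by omega)) _ (hm.1 0 2 (by omega) (by omega)) (hm.2 1 (by omega))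
    have := Equiv.Perm.viaEmbeddingHom_injective e this
    exact congrArg (fun e => ((e ⟨y, hy⟩ : {y // p y}) : Y)) this
  have hmov : ∀ y, a y ≠ y → t 2 y = t 4 y := by
    intro y hy
    let p : Y → Prop := fun y => a y ≠ y
    have hp : ∀ i y, p (trunc 3 (fun i => t (i+2)) i y) ↔ p y :=
      fun i y => not_congr (fix_iff (hc i) y)
    have hpa : ∀ y, p (a y) ↔ p y := fun y => not_congr (fix_iff (Commute.refl a) y)
    have hr := restr_br p _ hbt hp
    have hrc := fun i => restr_comm p (hc i) hpa (hp i)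
    set b := a.subtypePerm hpa with hbdef
    have hq : CycOn 3 (Quotient (Equiv.Perm.SameCycle.setoid b)) := by
      apply cyc_of_card_two
      have h1 := card_nofix b (by
        rintro ⟨z, hz⟩ h
        exact hz (congrArg Subtype.val h))
      have h2 : Nat.card {y // p y} ≤ Nat.card Y :=
        Nat.card_le_card_of_injective _ Subtype.val_injective
      omega
    have hs := quot_same b hq _ hr hrc
    let N : Subgroup (Equiv.Perm {y // p y}) :=
      { carrier := {g | Commute b g ∧ ∀ z, b.SameCycle z (g z)}
        mul_mem' := by
          rintro g g' ⟨h1, h2⟩ ⟨h3, h4⟩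
          exact ⟨h1.mul_right h3, fun z => (h4 z).trans (h2 (g' z))⟩
        one_mem' := ⟨Commute.one_right b, fun z => Equiv.Perm.SameCycle.refl _ _⟩
        inv_mem' := by
          rintro g ⟨h1, h2⟩
          refine ⟨h1.inv_right, fun z => ?_⟩
          have := h2 (g⁻¹ z)
          rw [show g (g⁻¹ z) = z from g.apply_symm_apply z] at this
          exact this.symm }
    have := meta3 N (x := _) (y := _) (z := _)
      (fun u hu v hv => pres_comm b u v hu.1 hv.1 hu.2 hv.2) ?_
      (⟨(hrc 0).mul_right (hrc 1).inv_right, div_pres (hs 0 1 (by omega) (by omega))⟩)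
      (⟨(hrc 2).mul_right (hrc 1).inv_right, div_pres (hs 2 1 (by omega) (by omega))⟩)
      (hr.2 0 (by omega)) (hr.2 1 (by omega)) (hr.1 0 2 (by omega) (by omega))
    · exact congrArg (fun e => ((e ⟨y, hy⟩ : {y // p y}) : Y)) this
    · rintro u ⟨h1, h2⟩
      refine ⟨((hrc 1).mul_right h1).mul_right (hrc 1).inv_right, fun z => ?_⟩
      have := (sameCycle_map (hrc 1) _ _).2 (h2 ((((trunc 3 (fun i => t (i+2)) 1)).subtypePerm (hp 1))⁻¹ z))
      rw [show ∀ g : Equiv.Perm {y // p y}, g (g⁻¹ z) = z from fun g => g.apply_symm_apply z] at this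
      exact this
  ext y
  by_cases hy : a y = y
  · exact hfix y hy
  · exact hmov y hy

theorem artin (m : ℕ) (hm : 4 ≤ m) : ∀ Y : Type, Finite Y → Nat.card Y ≤ m → CycOn m Y := by
  induction m using Nat.strong_induction_on with
  | _ m ih =>
    intro Y _ hY
    by_cases h4 : m = 4
    · subst h4; exact art4 hY
    by_cases h5 : m = 5
    · subst h5; exact art5 hY
    intro t ht
    by_cases h0 : t 0 = 1
    · exact ht.one (by omega) h0
    set a := t 0 with ha
    have hih := ih (m - 2) (by omega) (by omega)
    have hb : Br (m-2) (fun i => t (i + 2)) := ht.shift 2 (m-2) (by omega)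
    have hbt := hb.trunc
    have hc : ∀ i, Commute a (trunc (m-2) (fun i => t (i+2)) i) :=
      trunc_comm (fun i hi => ht.1 0 (i+2) (by omega) (by omega))
    have hmov := moved_cyc (m := m - 2) (by omega) a
      (fun Z hZ h => hih Z hZ (by omega)) _ hbt hc 0 1 (by omega) (by omega)
    have hfix := restr_cyc (fun y => a y = y)
      (hih {y // a y = y} inferInstance (by have := card_fix_le a h0; omega)) _ hbt
      (fun i y => fix_iff (hc i) y) 0 1 (by omega) (by omega)
    refine ht.cyc (i := 2) (by omega) ?_
    ext y
    have : trunc (m-2) (fun i => t (i+2)) 0 y = trunc (m-2) (fun i => t (i+2)) 1 y := by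
      by_cases hy : a y = y
      · exact hfix y hy
      · exact hmov y hy
    simpa [trunc, show 0 < m - 2 by omega, show 1 < m - 2 by omega] using this


def pr {G : Type*} [Group G] (s : ℕ → G) : ℕ → G
  | 0 => 1
  | k+1 => pr s k * s k

theorem pr_comm {G : Type*} [Group G] {m : ℕ} {s : ℕ → G} (h : Br m s) (j : ℕ) (hj : j < m) :
    ∀ k, k + 1 ≤ j → pr s k * s j = s j * pr s k := by
  intro k
  induction k with
  | zero => intro _; simp [pr]
  | succ k ih =>
    intro hk
    simp only [pr]
    rw [mul_assoc, h.1 k j (by omega) hj, ← mul_assoc, ih (by omega), mul_assoc]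

theorem pr_shift {G : Type*} [Group G] {m : ℕ} {s : ℕ → G} (h : Br m s) (i : ℕ) :
    ∀ k, i + 1 < k → k ≤ m → pr s k * s i = s (i+1) * pr s k := by
  intro k
  induction k with
  | zero => intro h; omega
  | succ k ih =>
    intro hik hk
    by_cases hc : i + 1 < k
    · simp only [pr]
      rw [mul_assoc, ← h.1 i k (by omega) (by omega), ← mul_assoc, ih hc (by omega), mul_assoc]
    · obtain rfl : k = i + 1 := by omega
      have e := pr_comm h (i+1) (by omega) i (by omega)
      have b := h.2 i (by omega)
      simp only [pr]
      calc pr s i * s i * s (i+1) * s i = pr s i * (s i * s (i+1) * s i) := by group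
        _ = pr s i * s (i+1) * (s i * s (i+1)) := by rw [b]; group
        _ = _ := by rw [e]; group

theorem pr_left {G : Type*} [Group G] (s : ℕ → G) (k : ℕ) :
    pr s (k+1) = s 0 * pr (fun i => s (i+1)) k := by
  induction k with
  | zero => simp [pr]
  | succ k ih => rw [pr, ih]; simp only [pr]; group

theorem pr_wrap {G : Type*} [Group G] {m : ℕ} {s : ℕ → G} (h : Br (m+1) s) :
    pr s (m+1) * pr s (m+1) * s m = s 0 * (pr s (m+1) * pr s (m+1)) := by
  have key : ∀ k, k ≤ m → pr s (m+1) * pr s k = pr (fun i => s (i+1)) k * pr s (m+1) := by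
    intro k
    induction k with
    | zero => intro _; simp [pr]
    | succ k ih =>
      intro hk
      show pr s (m+1) * (pr s k * s k) = (pr (fun i => s (i+1)) k * s (k+1)) * pr s (m+1)
      rw [← mul_assoc, ih (by omega), mul_assoc, pr_shift h k (m+1) (by omega) le_rfl, mul_assoc]
  have h1 := key m le_rfl
  have h2 := pr_left s m
  have h3 : pr s (m+1) = pr s m * s m := rfl
  calc pr s (m+1) * pr s (m+1) * s m
      = s 0 * (pr (fun i => s (i+1)) m * pr s (m+1)) * s m := by
        nth_rw 1 [h2]; group
    _ = s 0 * (pr s (m+1) * (pr s m * s m)) := by rw [← h1]; group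
    _ = _ := by rw [← h3]

structure Circ {G : Type*} [Group G] (n : ℕ) (S : ZMod n → G) (δ : G) : Prop where
  comm : ∀ i j, j ≠ i - 1 → j ≠ i + 1 → Commute (S i) (S j)
  braid : ∀ i, S i * S (i+1) * S i = S (i+1) * S i * S (i+1)
  shift : ∀ i, δ * S i = S (i+1) * δ
  gen : ∀ j, δ = S j * pr (fun k => S (j + 1 + (k : ℕ))) (n - 2)

theorem pr_map {G H : Type*} [Group G] [Group H] (f : G →* H) (s : ℕ → G) (k : ℕ) :
    f (pr s k) = pr (fun i => f (s i)) k := by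
  induction k with
  | zero => simp [pr]
  | succ k ih => simp [pr, ih]

theorem pr_congr {G : Type*} [Group G] (s t : ℕ → G) (k : ℕ) (h : ∀ i, i < k → s i = t i) :
    pr s k = pr t k := by
  induction k with
  | zero => simp [pr]
  | succ k ih =>
    simp only [pr]
    rw [ih (fun i hi => h i (by omega)), h k (by omega)]

theorem pr_mem {G : Type*} [Group G] (N : Subgroup G) (s : ℕ → G) (k : ℕ) (h : ∀ i, i < k → s i ∈ N) :
    pr s k ∈ N := by
  induction k with
  | zero => exact N.one_mem
  | succ k ih => exact N.mul_mem (ih (fun i hi => h i (by omega))) (h k (by omega))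

theorem Circ.map {G H : Type*} [Group G] [Group H] {n : ℕ} {S : ZMod n → G} {δ : G} (h : Circ n S δ)
    (f : G →* H) : Circ n (fun i => f (S i)) (f δ) where
  comm i j h1 h2 := (h.comm i j h1 h2).map f
  braid i := by simp only [← map_mul, h.braid i]
  shift i := by simp only [← map_mul, h.shift i]
  gen j := by
    have := congrArg f (h.gen j)
    rwa [map_mul, pr_map] at this

theorem Circ.gen_mem {G : Type*} [Group G] {n : ℕ} (hn : 7 ≤ n) {S : ZMod n → G} {δ : G} (h : Circ n S δ)
    (j : ZMod n) (N : Subgroup G) (hN : ∀ i, i ≠ j - 1 → i ≠ j → S i ∈ N) : (S j)⁻¹ * δ ∈ N := by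
  have e : (S j)⁻¹ * δ = pr (fun k => S (j + 1 + (k : ℕ))) (n - 2) := by
    rw [inv_mul_eq_iff_eq_mul]; exact h.gen j
  rw [e]
  apply pr_mem
  intro i hi
  apply hN
  · intro e
    have : ((i + 2 : ℕ) : ZMod n) = 0 := by push_cast at e ⊢; linear_combination e
    rw [ZMod.natCast_eq_zero_iff] at this
    have := Nat.le_of_dvd (by omega) this
    omega
  · intro e
    have : ((i + 1 : ℕ) : ZMod n) = 0 := by push_cast at e ⊢; linear_combination e
    rw [ZMod.natCast_eq_zero_iff] at this
    have := Nat.le_of_dvd (by omega) this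
    omega

theorem Circ.lift {G H : Type*} [Group G] [Group H] {n : ℕ} {S : ZMod n → G} {δ : G}
    (f : G →* H) (hf : Function.Injective f) (h : Circ n (fun i => f (S i)) (f δ)) : Circ n S δ where
  comm i j h1 h2 := hf (by rw [map_mul, map_mul]; exact h.comm i j h1 h2)
  braid i := hf (by simpa using h.braid i)
  shift i := hf (by simpa using h.shift i)
  gen j := hf (by rw [map_mul, pr_map]; exact h.gen j)

theorem Circ.shift_pow {G : Type*} [Group G] {n : ℕ} {S : ZMod n → G} {δ : G}
    (h : ∀ i, δ * S i = S (i+1) * δ) (k : ℕ) (i : ZMod n) : S (i + k) = MulAut.conj (δ^k) (S i) := by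
  induction k with
  | zero => simp
  | succ k ih =>
    have e := h (i+k)
    have e2 : S (i + k + 1) = δ * S (i+k) * δ⁻¹ := by rw [e]; group
    push_cast
    rw [← add_assoc, e2, ih]
    simp only [MulAut.conj_apply, pow_succ']
    group

theorem circ_exists {G : Type*} [Group G] {n : ℕ} (hn : 7 ≤ n) {s : ℕ → G} (h : Br (n-1) s) :
    ∃ S : ZMod n → G, Circ n S (pr s (n-1)) ∧ ∀ k, k < n - 1 → S (k : ZMod n) = s k := by
  have : NeZero n := ⟨by omega⟩
  have : Fact (1 < n) := ⟨by omega⟩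
  obtain ⟨m, rfl⟩ : ∃ m, n = m + 2 := ⟨n-2, by omega⟩
  simp only [show m + 2 - 1 = m + 1 by omega] at h ⊢
  set δ := pr s (m+1) with hδ
  let T : ℕ → G := fun k => δ^k * s 0 * (δ^k)⁻¹
  have T1 : ∀ k, T (k+1) = δ * T k * δ⁻¹ := by
    intro k; simp only [T, pow_succ']; group
  have Ts : ∀ k, k < m + 1 → T k = s k := by
    intro k
    induction k with
    | zero => intro _; simp [T]
    | succ k ih =>
      intro hk
      rw [T1, ih (by omega), hδ, pr_shift h k (m+1) (by omega) le_rfl]; group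
  have Tn : T (m+2) = T 0 := by
    rw [T1, T1, Ts m (by omega), Ts 0 (by omega)]
    have := pr_wrap h
    rw [← hδ] at this
    calc δ * (δ * s m * δ⁻¹) * δ⁻¹ = (δ * δ * s m) * (δ * δ)⁻¹ := by group
      _ = _ := by rw [this]; group
  let S : ZMod (m+2) → G := fun i => T i.val
  have S1 : ∀ i, S (i+1) = δ * S i * δ⁻¹ := by
    intro i
    simp only [S]
    rw [ZMod.val_add, ZMod.val_one, ← T1]
    have := i.val_lt
    by_cases hc : i.val + 1 < m + 2
    · rw [Nat.mod_eq_of_lt hc]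
    · have : i.val + 1 = m + 2 := by omega
      rw [this, Nat.mod_self, Tn]
  have Sk : ∀ k, k < m + 1 → S (k : ZMod (m+2)) = s k := by
    intro k hk
    simp only [S]
    rw [ZMod.val_natCast, Nat.mod_eq_of_lt (by omega), Ts k hk]
  have sh : ∀ i, δ * S i = S (i+1) * δ := by intro i; rw [S1]; group
  have sp := Circ.shift_pow sh
  have S0 : S 0 = s 0 := by have := Sk 0 (by omega); simpa using this
  refine ⟨S, ⟨?_, ?_, sh, ?_⟩, Sk⟩
  · intro i j h1 h2
    have key : ∀ d : ZMod (m+2), d ≠ -1 → d ≠ 1 → Commute (S 0) (S d) := by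
      intro d hd1 hd2
      have hd : ((d.val : ℕ) : ZMod (m+2)) = d := ZMod.natCast_zmod_val d
      have hl := d.val_lt
      have a1 : d.val ≠ 1 := by intro e; rw [e] at hd; exact hd2 (by simpa using hd.symm)
      have a2 : d.val ≠ m + 1 := by
        intro e; rw [e] at hd; apply hd1; rw [← hd]
        have : ((m + 2 : ℕ) : ZMod (m+2)) = 0 := ZMod.natCast_self _
        push_cast at this ⊢
        linear_combination this
      by_cases h0 : d.val = 0
      · rw [h0] at hd; simp at hd; rw [← hd]
      · rw [← hd, S0, Sk _ (by omega)]
        exact h.1 0 d.val (by omega) (by omega)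
    have e1 := sp i.val 0
    have e2 := sp i.val (j - i)
    rw [ZMod.natCast_zmod_val] at e1 e2
    rw [zero_add] at e1; rw [sub_add_cancel] at e2
    rw [e1, e2]
    refine (key (j-i) ?_ ?_).map (MulAut.conj (δ^i.val))
    · intro e; apply h1; linear_combination e
    · intro e; apply h2; linear_combination e
  · intro i
    have e1 := sp i.val 0
    have e2 := sp i.val 1
    rw [ZMod.natCast_zmod_val] at e1 e2
    rw [zero_add] at e1; rw [add_comm] at e2
    rw [e1, e2, ← map_mul, ← map_mul, ← map_mul, ← map_mul]
    congr 1
    have s1 := Sk 1 (by omega)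
    simp only [Nat.cast_one] at s1
    rw [S0, s1]
    exact h.2 0 (by omega)
  · intro j
    have e1 := sp j.val 0
    rw [ZMod.natCast_zmod_val, zero_add] at e1
    have e0 : δ = S 0 * pr (fun k => S (0 + 1 + (k : ℕ))) m := by
      rw [hδ, pr_left, S0]
      congr 1
      apply pr_congr
      intro i hi
      rw [← Sk (i+1) (by omega)]
      congr 1
      push_cast; ring
    have e2 := congrArg (MulAut.conj (δ^j.val)).toMonoidHom e0
    rw [map_mul, pr_map _ (fun k => S (0 + 1 + (k : ℕ)))] at e2
    have e3 : (MulAut.conj (δ^j.val)).toMonoidHom δ = δ := by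
      show MulAut.conj (δ^j.val) δ = δ
      rw [MulAut.conj_apply]; group
    rw [e3] at e2
    refine e2.trans ?_
    show MulAut.conj (δ^j.val) (S 0) * _ = _
    rw [← e1]
    congr 1
    apply pr_congr
    intro i _
    show MulAut.conj (δ^j.val) _ = _
    rw [← sp, ZMod.natCast_zmod_val]
    congr 1
    ring


theorem nat_ne {n : ℕ} (k : ℕ) (h0 : 0 < k) (hk : k < n) : (k : ZMod n) ≠ 0 := by
  intro e
  rw [ZMod.natCast_eq_zero_iff] at e
  have := Nat.le_of_dvd h0 e
  omega

theorem zne {n : ℕ} (hn : 7 ≤ n) : (1 : ZMod n) ≠ 0 ∧ (2 : ZMod n) ≠ 0 ∧ (3 : ZMod n) ≠ 0 ∧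
    (4 : ZMod n) ≠ 0 ∧ (5 : ZMod n) ≠ 0 ∧ (6 : ZMod n) ≠ 0 := by
  refine ⟨?_, ?_, ?_, ?_, ?_, ?_⟩
  · exact_mod_cast nat_ne (n := n) 1 (by omega) (by omega)
  · exact_mod_cast nat_ne (n := n) 2 (by omega) (by omega)
  · exact_mod_cast nat_ne (n := n) 3 (by omega) (by omega)
  · exact_mod_cast nat_ne (n := n) 4 (by omega) (by omega)
  · exact_mod_cast nat_ne (n := n) 5 (by omega) (by omega)
  · exact_mod_cast nat_ne (n := n) 6 (by omega) (by omega)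

theorem dn {n : ℕ} (hn : 7 ≤ n) (k : ℕ) {a b : ZMod n} (h : a = b + k) (h0 : 0 < k := by omega)
    (h7 : k < 7 := by omega) : a ≠ b := by
  intro e
  exact nat_ne (n := n) k h0 (by omega) (by linear_combination e - h)

theorem exists_avoid {n : ℕ} (hn : 7 ≤ n) (a b c d e f : ZMod n) :
    ∃ m : ZMod n, m ≠ a ∧ m ≠ b ∧ m ≠ c ∧ m ≠ d ∧ m ≠ e ∧ m ≠ f := by
  have : NeZero n := ⟨by omega⟩
  by_contra hcon
  have hs : (Finset.univ : Finset (ZMod n)) ⊆ {a, b, c, d, e, f} := by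
    intro m _
    simp only [Finset.mem_insert, Finset.mem_singleton]
    by_contra hm
    push Not at hm
    exact hcon ⟨m, hm.1, hm.2.1, hm.2.2.1, hm.2.2.2.1, hm.2.2.2.2.1, hm.2.2.2.2.2⟩
  have h1 := Finset.card_le_card hs
  rw [Finset.card_univ, ZMod.card] at h1
  have h2 : ({a, b, c, d, e, f} : Finset (ZMod n)).card ≤ 6 := Finset.card_le_six
  omega

theorem inv_of_fwd {X : Type} [Finite X] (g : Equiv.Perm X) (p : X → Prop) (h : ∀ x, p x → p (g x)) :
    ∀ x, p (g x) → p x := by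
  intro x hx
  have h1 : ∀ k : ℕ, ∀ y, p y → p ((g^k) y) := by
    intro k
    induction k with
    | zero => intro y hy; simpa using hy
    | succ k ih => intro y hy; rw [pow_succ', Equiv.Perm.mul_apply]; exact h _ (ih y hy)
  have h2 := orderOf_pos g
  have h3 := h1 (orderOf g - 1) _ hx
  rw [← Equiv.Perm.mul_apply, ← pow_succ, Nat.sub_add_cancel h2, pow_orderOf_eq_one] at h3
  simpa using h3

def Big {X : Type} (g : Equiv.Perm X) (x : X) : Prop := g x ≠ x ∧ g (g x) ≠ x

def CC {X : Type} {n : ℕ} (S : ZMod n → Equiv.Perm X) (x : X) : Prop := ∀ i k, S i x = S k x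

theorem Circ.ap {X : Type} {n : ℕ} {S : ZMod n → Equiv.Perm X} {δ : Equiv.Perm X} (h : Circ n S δ)
    {i j : ZMod n} (h1 : j ≠ i - 1) (h2 : j ≠ i + 1) (x : X) : S i (S j x) = S j (S i x) := by
  have := congrArg (fun g : Equiv.Perm X => g x) (h.comm i j h1 h2).eq
  simpa using this

theorem Circ.sh {X : Type} {n : ℕ} {S : ZMod n → Equiv.Perm X} {δ : Equiv.Perm X} (h : Circ n S δ)
    (i : ZMod n) (x : X) : δ (S i x) = S (i+1) (δ x) := by
  have := congrArg (fun g : Equiv.Perm X => g x) (h.shift i)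
  simpa using this

theorem CC_fwd {X : Type} {n : ℕ} (hn : 7 ≤ n) {S : ZMod n → Equiv.Perm X} {δ : Equiv.Perm X}
    (h : Circ n S δ) (i : ZMod n) (x : X) (hx : CC S x) : CC S (S i x) := by
  have key : ∀ j, S j (S i x) = S i (S i x) := by
    intro j
    obtain ⟨m, h1, h2, h3, h4, -, -⟩ := exists_avoid hn (i-1) (i+1) (j-1) (j+1) i i
    calc S j (S i x) = S j (S m x) := by rw [hx i m]
      _ = S m (S j x) := h.ap h3 h4 x
      _ = S m (S i x) := by rw [hx j i]
      _ = S i (S m x) := (h.ap h1 h2 x).symm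
      _ = _ := by rw [hx m i]
  intro j k
  rw [key j, key k]

theorem CC_iff {X : Type} [Finite X] {n : ℕ} (hn : 7 ≤ n) {S : ZMod n → Equiv.Perm X} {δ : Equiv.Perm X}
    (h : Circ n S δ) (i : ZMod n) (x : X) : CC S (S i x) ↔ CC S x :=
  ⟨inv_of_fwd (S i) (CC S) (CC_fwd hn h i) x, CC_fwd hn h i x⟩

theorem CC_shift {X : Type} {n : ℕ} {S : ZMod n → Equiv.Perm X} {δ : Equiv.Perm X}
    (h : Circ n S δ) (x : X) : CC S (δ x) ↔ CC S x := by
  constructor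
  · intro hx i k
    apply δ.injective
    rw [h.sh, h.sh]; exact hx _ _
  · intro hx i k
    have a := h.sh (i-1) x
    have b := h.sh (k-1) x
    rw [sub_add_cancel] at a b
    rw [← a, ← b, hx (i-1) (k-1)]

theorem Big_shift {X : Type} {n : ℕ} {S : ZMod n → Equiv.Perm X} {δ : Equiv.Perm X}
    (h : Circ n S δ) (i : ZMod n) (x : X) : Big (S (i+1)) (δ x) ↔ Big (S i) x := by
  unfold Big
  rw [← h.sh, ← h.sh, δ.injective.ne_iff, δ.injective.ne_iff]

theorem F1 {X : Type} [Finite X] {n : ℕ} (hn : 7 ≤ n) (hX : Nat.card X ≤ 2 * n)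
    {S : ZMod n → Equiv.Perm X} {δ : Equiv.Perm X}
    (h : Circ n S δ) (i j k : ZMod n) (x : X) (hx : Big (S i) x)
    (j1 : j ≠ i - 1) (j2 : j ≠ i) (j3 : j ≠ i + 1) (k1 : k ≠ i - 1) (k2 : k ≠ i) (k3 : k ≠ i + 1) :
    S j x = S k x := by
  have : NeZero n := ⟨by omega⟩
  have hB : Br (n-3) (fun l => S (i + 2 + (l : ℕ))) := by
    constructor
    · intro l m hlm hm
      obtain ⟨d, rfl⟩ : ∃ d, m = l + d := ⟨m - l, by omega⟩
      refine h.comm _ _ ?_ ?_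
      · intro e
        refine nat_ne (n := n) (d+1) (by omega) (by omega) ?_
        push_cast at e ⊢; linear_combination e
      · intro e
        refine nat_ne (n := n) (d-1) (by omega) (by omega) ?_
        rw [Nat.cast_sub (by omega)]
        push_cast at e ⊢; linear_combination e
    · intro l _
      have := h.braid (i + 2 + (l : ℕ))
      push_cast
      rw [← add_assoc]; exact this
  have hc : ∀ l, l < n - 3 → Commute (S i) (S (i + 2 + (l : ℕ))) := by
    intro l hl
    refine h.comm _ _ ?_ ?_
    · intro e
      refine nat_ne (n := n) (l+3) (by omega) (by omega) ?_
      push_cast; linear_combination e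
    · intro e
      refine nat_ne (n := n) (l+1) (by omega) (by omega) ?_
      push_cast; linear_combination e
  have key := big_agree (m := n-3) (by omega) (S i) (artin (n-3) (by omega)) (by omega) _ hB hc
  have idx : ∀ j : ZMod n, j ≠ i - 1 → j ≠ i → j ≠ i + 1 → ∃ l : ℕ, l < n - 3 ∧ j = i + 2 + (l : ℕ) := by
    intro j j1 j2 j3
    have hv : (((j - i - 2).val : ℕ) : ZMod n) = j - i - 2 := ZMod.natCast_zmod_val _
    have hl := (j - i - 2).val_lt
    have n0 : ((n : ℕ) : ZMod n) = 0 := ZMod.natCast_self n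
    refine ⟨(j - i - 2).val, ?_, by rw [hv]; ring⟩
    by_contra hcon
    have : (j - i - 2).val = n - 3 ∨ (j - i - 2).val = n - 2 ∨ (j - i - 2).val = n - 1 := by omega
    rcases this with e | e | e
    · rw [e, Nat.cast_sub (by omega), n0] at hv; push_cast at hv
      exact j1 (by linear_combination -hv)
    · rw [e, Nat.cast_sub (by omega), n0] at hv; push_cast at hv
      exact j2 (by linear_combination -hv)
    · rw [e, Nat.cast_sub (by omega), n0] at hv; push_cast at hv
      exact j3 (by linear_combination -hv)
  obtain ⟨l, hl, rfl⟩ := idx j j1 j2 j3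
  obtain ⟨m, hm, rfl⟩ := idx k k1 k2 k3
  exact key l m hl hm x hx.1 hx.2

theorem Big_comm {X : Type} {a b : Equiv.Perm X} (h : ∀ y, a (b y) = b (a y)) (x : X) :
    Big a (b x) ↔ Big a x := by
  unfold Big
  rw [h, h, b.injective.ne_iff, b.injective.ne_iff]

theorem F2 {X : Type} [Finite X] {n : ℕ} (hn : 7 ≤ n) (hX : Nat.card X ≤ 2 * n)
    {S : ZMod n → Equiv.Perm X} {δ : Equiv.Perm X}
    (h : Circ n S δ) (i k : ZMod n) (x : X) (hx : Big (S i) x) (hk : Big (S k) x)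
    (k1 : k ≠ i - 1) (k2 : k ≠ i) (k3 : k ≠ i + 1) : CC S x := by
  have hm : ∀ m, m ≠ i - 1 → m ≠ i → m ≠ i + 1 → Big (S m) x := by
    intro m m1 m2 m3
    have e1 := F1 hn hX h i m k x hx m1 m2 m3 k1 k2 k3
    have hx' : Big (S i) (S k x) := (Big_comm (fun y => h.ap k1 k3 y) x).2 hx
    have e2 := F1 hn hX h i m k _ hx' m1 m2 m3 k1 k2 k3
    unfold Big
    rw [e1, e2]; exact hk
  have key : ∀ j, S j x = S k x := by
    intro j
    by_cases hj : j ≠ i - 1 ∧ j ≠ i ∧ j ≠ i + 1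
    · exact F1 hn hX h i j k x hx hj.1 hj.2.1 hj.2.2 k1 k2 k3
    · obtain ⟨m, m1, m2, m3, m4, m5, m6⟩ := exists_avoid hn (i-1) i (i+1) (j-1) j (j+1)
      obtain ⟨m', a1, a2, a3, a4, a5, a6⟩ := exists_avoid hn (i-1) i (i+1) (m-1) m (m+1)
      have e1 := F1 hn hX h m j m' x (hm m m1 m2 m3) (by grind) (by grind) (by grind) a4 a5 a6
      rw [e1]
      exact F1 hn hX h i m' k x hx a1 a2 a3 k1 k2 k3
  intro a b
  rw [key a, key b]


def Good {X : Type} {n : ℕ} (S : ZMod n → Equiv.Perm X) (x : X) : Prop :=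
  ∃ j, ∀ i k, i ≠ j - 1 → i ≠ j → k ≠ j - 1 → k ≠ j → S i x = S k x

theorem Big_conj {X : Type} (a g : Equiv.Perm X) (x : X) : Big (g * a * g⁻¹) (g x) ↔ Big a x := by
  unfold Big; simp

open Classical in
noncomputable def BB {X : Type} [Fintype X] {n : ℕ} (S : ZMod n → Equiv.Perm X) (i : ZMod n) : Finset X :=
  Finset.univ.filter (fun x => Big (S i) x ∧ ¬ CC S x)

theorem mem_BB {X : Type} [Fintype X] {n : ℕ} {S : ZMod n → Equiv.Perm X} {i : ZMod n} {x : X} :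
    x ∈ BB S i ↔ Big (S i) x ∧ ¬ CC S x := by simp [BB]

theorem BB_shift {X : Type} [Fintype X] {n : ℕ} {S : ZMod n → Equiv.Perm X} {δ : Equiv.Perm X}
    (h : Circ n S δ) (i : ZMod n) (x : X) : δ x ∈ BB S (i+1) ↔ x ∈ BB S i := by
  rw [mem_BB, mem_BB, Big_shift h, CC_shift h]

theorem BB_comm {X : Type} [Fintype X] {n : ℕ} (hn : 7 ≤ n) {S : ZMod n → Equiv.Perm X} {δ : Equiv.Perm X}
    (h : Circ n S δ) (i k : ZMod n) (h1 : k ≠ i - 1) (h2 : k ≠ i + 1) (x : X) :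
    S k x ∈ BB S i ↔ x ∈ BB S i := by
  rw [mem_BB, mem_BB, CC_iff hn h, Big_comm (fun y => h.ap h1 h2 y)]

theorem zind {n : ℕ} (hn : 7 ≤ n) (P : ZMod n → Prop) (i : ZMod n) (hi : P i) (hs : ∀ j, P j → P (j+1)) :
    ∀ j, P j := by
  have : NeZero n := ⟨by omega⟩
  have key : ∀ k : ℕ, P (i + k) := by
    intro k
    induction k with
    | zero => simpa using hi
    | succ k ih => push_cast; rw [← add_assoc]; exact hs _ ih
  intro j
  have := key (j - i).val
  rw [ZMod.natCast_zmod_val] at this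
  simpa using this

theorem BB_adj {X : Type} [Fintype X] {n : ℕ} (hn : 7 ≤ n) (hX : Nat.card X ≤ 2 * n)
    {S : ZMod n → Equiv.Perm X} {δ : Equiv.Perm X} (h : Circ n S δ) {i k : ZMod n} {x : X}
    (hi : x ∈ BB S i) (hk : x ∈ BB S k) : k = i - 1 ∨ k = i ∨ k = i + 1 := by
  by_contra hcon
  push Not at hcon
  rw [mem_BB] at hi hk
  exact hi.2 (F2 hn hX h i k x hi.1 hk.1 hcon.1 hcon.2.1 hcon.2.2)

theorem BB_good {X : Type} [Fintype X] {n : ℕ} (hn : 7 ≤ n) (hX : Nat.card X ≤ 2 * n)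
    {S : ZMod n → Equiv.Perm X} {δ : Equiv.Perm X} (h : Circ n S δ) {i : ZMod n} {x : X}
    (hi : x ∈ BB S i) (hk : x ∈ BB S (i+1)) : Good S x := by
  obtain ⟨z1, z2, z3, z4, z5, z6⟩ := zne hn
  rw [mem_BB] at hi hk
  obtain ⟨m, m1, m2, m3, m4, -, -⟩ := exists_avoid hn (i-1) i (i+1) (i+2) i i
  have key : ∀ k, k ≠ i → k ≠ i + 1 → S k x = S m x := by
    intro k k1 k2
    by_cases hk1 : k = i - 1
    · subst hk1
      refine F1 hn hX h (i+1) _ _ x hk.1 ?_ k2 ?_ ?_ m3 ?_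
      · rw [add_sub_cancel_right]; exact k1
      · exact (dn hn 3 (by ring)).symm
      · rw [add_sub_cancel_right]; exact m2
      · intro e; exact m4 (by rw [e]; ring)
    · exact F1 hn hX h i _ _ x hi.1 hk1 k1 k2 m1 m2 m3
  refine ⟨i+1, ?_⟩
  intro a b a1 a2 b1 b2
  rw [add_sub_cancel_right] at a1 b1
  rw [key a a1 a2, key b b1 b2]

theorem big_case {X : Type} [Fintype X] {n : ℕ} (hn : 7 ≤ n) (hX : Nat.card X ≤ 2 * n)
    {S : ZMod n → Equiv.Perm X} {δ : Equiv.Perm X} (h : Circ n S δ)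
    (hne : ∃ i x, x ∈ BB S i) : ∀ x, Good S x := by
  classical
  have : NeZero n := ⟨by omega⟩
  obtain ⟨z1, z2, z3, z4, z5, z6⟩ := zne hn
  obtain ⟨i₀, x₀, hx₀⟩ := hne
  have cardS : ∀ i, (BB S (i+1)).card = (BB S i).card := by
    intro i
    rw [← Finset.card_map (f := δ.toEmbedding) (s := BB S i)]
    congr 1
    ext x
    rw [Finset.mem_map_equiv, ← BB_shift h i (δ.symm x), Equiv.apply_symm_apply]
  set r := (BB S i₀).card with hr
  have cardB : ∀ i, (BB S i).card = r :=
    zind hn _ i₀ hr.symm (fun j hj => by rw [cardS, hj])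
  have r3 : 3 ≤ r := by
    have a1 := (BB_comm hn h i₀ i₀ (dn hn 1 (by ring)) (dn hn 1 (by ring)).symm x₀).2 hx₀
    have a2 := (BB_comm hn h i₀ i₀ (dn hn 1 (by ring)) (dn hn 1 (by ring)).symm _).2 a1
    have hb := (mem_BB.1 hx₀).1
    have hb2 := (mem_BB.1 a1).1
    have : ({x₀, S i₀ x₀, S i₀ (S i₀ x₀)} : Finset X) ⊆ BB S i₀ := by
      intro y hy; simp only [Finset.mem_insert, Finset.mem_singleton] at hy
      rcases hy with rfl | rfl | rfl <;> assumption
    have c := Finset.card_le_card this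
    rw [Finset.card_eq_three.2 ⟨_, _, _, hb.1.symm, hb.2.symm, hb2.1.symm, rfl⟩] at c
    exact c
  let D : X → Finset (ZMod n) := fun x => Finset.univ.filter (fun i => x ∈ BB S i)
  have dc : ∑ x, (D x).card = n * r := by
    have := Finset.sum_card_bipartiteAbove_eq_sum_card_bipartiteBelow
      (s := (Finset.univ : Finset X)) (t := (Finset.univ : Finset (ZMod n))) (fun x i => x ∈ BB S i)
    have e2 : ∀ i : ZMod n, (Finset.bipartiteBelow (fun x i => x ∈ BB S i) (Finset.univ : Finset X) i) = BB S i := by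
      intro i; ext x; simp [Finset.bipartiteBelow]
    simp only [e2, cardB, Finset.sum_const, Finset.card_univ, ZMod.card, smul_eq_mul] at this
    rw [← this]; rfl
  have d2 : ∀ x, (D x).card ≤ 2 := by
    intro x
    by_contra hcon
    obtain ⟨a, b, c, ha, hb, hc, hab, hac, hbc⟩ := Finset.two_lt_card_iff.1 (not_le.1 hcon)
    simp only [D, Finset.mem_filter, Finset.mem_univ, true_and] at ha hb hc
    have e1 := BB_adj hn hX h ha hb
    have e2 := BB_adj hn hX h ha hc
    have e3 := BB_adj hn hX h hb hc
    have f1 : a - 1 ≠ a + 1 - 1 := (dn hn 1 (by ring)).symm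
    have f2 : a - 1 ≠ a + 1 + 1 := (dn hn 3 (by ring)).symm
    have f3 : a - 1 ≠ a + 1 := (dn hn 2 (by ring)).symm
    have f4 : a + 1 ≠ a - 1 - 1 := (dn hn 3 (by ring))
    have f5 : a + 1 ≠ a - 1 + 1 := (dn hn 1 (by ring))
    rcases e1 with rfl | rfl | rfl <;> rcases e2 with rfl | rfl | rfl <;> rcases e3 with e | e | e <;>
      first | exact hab rfl | exact hac rfl | exact hbc rfl | exact f1 e | exact f2 e | exact f3 e |
        exact f4 e | exact f5 e | exact f3 e.symm
  have two : ∀ x, 2 ≤ (D x).card → ∃ i, x ∈ BB S i ∧ x ∈ BB S (i+1) := by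
    intro x hx
    obtain ⟨a, b, ha, hb, hab⟩ := Finset.one_lt_card_iff.1 hx
    simp only [D, Finset.mem_filter, Finset.mem_univ, true_and] at ha hb
    rcases BB_adj hn hX h ha hb with e | e | e
    · exact ⟨b, hb, by rw [e, sub_add_cancel]; exact ha⟩
    · exact absurd e.symm hab
    · exact ⟨a, ha, e ▸ hb⟩
  rw [Nat.card_eq_fintype_card] at hX
  by_cases h4 : 4 ≤ r
  · intro x
    have hx : 2 ≤ (D x).card := by
      by_contra hcon
      have : ∑ x, (D x).card < ∑ x : X, 2 :=
        Finset.sum_lt_sum (fun i _ => d2 i) ⟨x, Finset.mem_univ x, by omega⟩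
      rw [dc] at this
      simp only [Finset.sum_const, Finset.card_univ, smul_eq_mul] at this
      have := Nat.mul_le_mul_left n h4
      omega
    obtain ⟨i, h1, h2⟩ := two x hx
    exact BB_good hn (by rw [Nat.card_eq_fintype_card]; exact hX) h h1 h2
  · exfalso
    have hr3 : r = 3 := by omega
    rw [hr3] at dc
    have hp : ∃ x, 2 ≤ (D x).card := by
      by_contra hcon
      push Not at hcon
      have : ∑ x, (D x).card ≤ ∑ x : X, 1 := Finset.sum_le_sum (fun i _ => by have := hcon i; omega)
      rw [dc] at this
      simp only [Finset.sum_const, Finset.card_univ, smul_eq_mul] at this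
      omega
    obtain ⟨p, hp⟩ := hp
    obtain ⟨i, p1, p2⟩ := two p hp
    have hX' : Nat.card X ≤ 2 * n := by rw [Nat.card_eq_fintype_card]; exact hX
    -- uniqueness
    have uniq : ∀ j x y, x ∈ BB S j → x ∈ BB S (j+1) → y ∈ BB S j → y ∈ BB S (j+1) → x = y := by
      intro j x y x1 x2 y1 y2
      by_contra hxy
      have x3 := (BB_shift h _ x).2 x1
      have x4 := (BB_shift h _ x).2 x2
      have y3 := (BB_shift h _ y).2 y1
      have y4 := (BB_shift h _ y).2 y2
      have hd : δ x ≠ δ y := δ.injective.ne hxy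
      have dis : ∀ u v, u ∈ BB S j → v ∈ BB S (j+1+1) → u ≠ v := by
        intro u v hu hv e
        subst e
        rcases BB_adj hn hX' h hu hv with e | e | e
        · exact absurd e (dn hn 3 (by ring))
        · exact absurd e (dn hn 2 (by ring))
        · exact absurd e (dn hn 1 (by ring))
      have sub : ({x, y, δ x, δ y} : Finset X) ⊆ BB S (j+1) := by
        intro z hz; simp only [Finset.mem_insert, Finset.mem_singleton] at hz
        rcases hz with rfl | rfl | rfl | rfl <;> assumption
      have c := Finset.card_le_card sub
      rw [cardB, hr3] at c
      have : ({x, y, δ x, δ y} : Finset X).card = 4 := by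
        rw [Finset.card_insert_of_notMem, Finset.card_eq_three.2 ⟨_, _, _, dis _ _ y1 x4, dis _ _ y1 y4, hd, rfl⟩]
        simp only [Finset.mem_insert, Finset.mem_singleton, not_or]
        exact ⟨hxy, dis _ _ x1 x4, dis _ _ x1 y4⟩
      omega
    have fixp : S (i-1) p = p := by
      by_contra hcon
      have hnb : ¬ Big (S (i-1)) p := by
        intro hb
        rcases BB_adj hn hX' h p2 (mem_BB.2 ⟨hb, (mem_BB.1 p2).2⟩) with e | e | e
        · exact absurd e (dn hn 1 (by ring)).symm
        · exact absurd e (dn hn 2 (by ring)).symm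
        · exact absurd e (dn hn 3 (by ring)).symm
      have hinv : S (i-1) (S (i-1) p) = p := by
        by_contra h2; exact hnb ⟨hcon, h2⟩
      have q1 := (BB_comm hn h (i+1) (i+1) (dn hn 1 (by ring)) (dn hn 1 (by ring)).symm p).2 p2
      have q2 := (BB_comm hn h (i+1) (i+1) (dn hn 1 (by ring)) (dn hn 1 (by ring)).symm _).2 q1
      have q3 := (BB_comm hn h (i+1) (i+1) (dn hn 1 (by ring)) (dn hn 1 (by ring)).symm _).2 q2
      have q4 := (BB_comm hn h (i+1) (i-1) (dn hn 1 (by ring)).symm (dn hn 3 (by ring)).symm p).2 p2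
      have b1 := (mem_BB.1 p2).1
      have b2 := (mem_BB.1 q1).1
      have hset : ({p, S (i+1) p, S (i+1) (S (i+1) p)} : Finset X) = BB S (i+1) := by
        apply Finset.eq_of_subset_of_card_le
        · intro y hy; simp only [Finset.mem_insert, Finset.mem_singleton] at hy
          rcases hy with rfl | rfl | rfl <;> assumption
        · rw [Finset.card_eq_three.2 ⟨_, _, _, b1.1.symm, b1.2.symm, b2.1.symm, rfl⟩, cardB, hr3]
      have cm : ∀ y, S (i-1) (S (i+1) y) = S (i+1) (S (i-1) y) := fun y => h.ap (dn hn 3 (by ring)) (dn hn 1 (by ring)) y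
      rw [← hset] at q3 q4
      simp only [Finset.mem_insert, Finset.mem_singleton] at q3 q4
      have c3 : S (i+1) (S (i+1) (S (i+1) p)) = p := by
        rcases q3 with e | e | e
        · exact e
        · exact absurd e b2.2
        · exact absurd ((S (i+1)).injective e) b2.1
      rcases q4 with e | e | e
      · exact hcon e
      · rw [e, cm, e] at hinv
        exact b1.2 hinv
      · rw [e, cm, cm, e, c3] at hinv
        exact b1.1 hinv
    have br := h.braid (i-1)
    rw [sub_add_cancel] at br
    have fixp' : (S (i-1))⁻¹ p = p := by rw [Equiv.Perm.inv_eq_iff_eq, fixp]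
    have hb := (mem_BB.1 p1).1
    have hcc := (mem_BB.1 p1).2
    have r1 : Big (S (i-1)) (S i p) := by
      have a := (Big_conj (S i) (S (i-1)) p).2 hb
      rw [fixp] at a
      have e : S (i-1) * S i * (S (i-1))⁻¹ = (S i)⁻¹ * S (i-1) * S i := by
        rw [mul_inv_eq_iff_eq_mul, mul_assoc, mul_assoc, ← mul_assoc (S (i-1)) (S i), br]; group
      rw [e] at a
      have := (Big_conj _ (S i) p).2 a
      have e2 : S i * ((S i)⁻¹ * S (i-1) * S i) * (S i)⁻¹ = S (i-1) := by group
      rwa [e2] at this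
    have r2 : Big (S (i-1)) ((S i)⁻¹ p) := by
      have a := (Big_conj (S i) (S (i-1))⁻¹ p).2 hb
      rw [fixp', inv_inv] at a
      have e : (S (i-1))⁻¹ * S i * S (i-1) = S i * S (i-1) * (S i)⁻¹ := by
        rw [eq_mul_inv_iff_mul_eq, mul_assoc, mul_assoc, inv_mul_eq_iff_eq_mul, ← mul_assoc, ← mul_assoc, br]
      rw [e] at a
      have := (Big_conj _ (S i)⁻¹ p).2 a
      have e2 : (S i)⁻¹ * (S i * S (i-1) * (S i)⁻¹) * (S i)⁻¹⁻¹ = S (i-1) := by group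
      rwa [e2] at this
    have m1 : S i p ∈ BB S i := (BB_comm hn h i i (dn hn 1 (by ring)) (dn hn 1 (by ring)).symm p).2 p1
    have m2 : (S i)⁻¹ p ∈ BB S i := by
      rw [← BB_comm hn h i i (dn hn 1 (by ring)) (dn hn 1 (by ring)).symm]
      simpa using p1
    have m3 : S i p ∈ BB S (i-1) := mem_BB.2 ⟨r1, (mem_BB.1 m1).2⟩
    have m4 : (S i)⁻¹ p ∈ BB S (i-1) := mem_BB.2 ⟨r2, (mem_BB.1 m2).2⟩
    have := uniq (i-1) _ _ m3 (by rwa [sub_add_cancel]) m4 (by rwa [sub_add_cancel])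
    rw [Equiv.Perm.eq_inv_iff_eq] at this
    exact hb.2 this


theorem cox_card {G : Type*} [Group G] {m : ℕ} {t : ℕ → G} (h : Br m t) (h2 : ∀ i, i < m → t i * t i = 1) :
    ∀ k, k ≤ m → ∃ A : Finset G, A.card ≤ (k+1).factorial ∧ 1 ∈ A ∧
      ∀ i, i < k → ∀ g ∈ A, t i * g ∈ A := by
  classical
  intro k
  induction k with
  | zero => intro _; exact ⟨{1}, by simp, by simp, by intro i hi; omega⟩
  | succ k ih =>
    intro hk
    obtain ⟨A, hA, h1, hc⟩ := ih (by omega)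
    let w : ℕ → G := fun j => pr (fun i => t (i + j)) (k + 1 - j)
    have wk : w (k+1) = 1 := by simp [w, pr]
    have wl : ∀ j, j ≤ k → w j = t j * w (j+1) := by
      intro j hj
      obtain ⟨d, rfl⟩ : ∃ d, k = j + d := ⟨k - j, by omega⟩
      simp only [w]
      rw [show j + d + 1 - j = d + 1 by omega, pr_left, show j + d + 1 - (j + 1) = d by omega]
      simp only [zero_add]
      congr 2
      funext i
      congr 1
      ring
    refine ⟨(Finset.range (k+2)).biUnion (fun j => A.image (fun g => w j * g)), ?_, ?_, ?_⟩
    · calc _ ≤ (Finset.range (k+2)).card * (k+1).factorial :=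
            Finset.card_biUnion_le_card_mul _ _ _ (fun j _ => Finset.card_image_le.trans hA)
        _ = _ := by rw [Finset.card_range]; rfl
    · simp only [Finset.mem_biUnion, Finset.mem_image, Finset.mem_range]
      exact ⟨k+1, by omega, 1, h1, by rw [wk, one_mul]⟩
    · intro i hi g hg
      simp only [Finset.mem_biUnion, Finset.mem_image, Finset.mem_range] at hg ⊢
      obtain ⟨j, hj, a, ha, rfl⟩ := hg
      rcases lt_trichotomy i j with hij | rfl | hij
      · by_cases e : j = i + 1
        · subst e
          exact ⟨i, by omega, a, ha, by rw [wl i (by omega), mul_assoc]⟩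
        · refine ⟨j, hj, t i * a, hc i (by omega) a ha, ?_⟩
          have : ∀ l, l ≤ k + 1 - j → t i * pr (fun i => t (i+j)) l = pr (fun i => t (i+j)) l * t i := by
            intro l
            induction l with
            | zero => intro _; simp [pr]
            | succ l ihl =>
              intro hl
              simp only [pr]
              rw [← mul_assoc, ihl (by omega), mul_assoc, h.1 i (l+j) (by omega) (by omega), mul_assoc]
          rw [← mul_assoc, ← mul_assoc]
          congr 1
          exact (this _ le_rfl).symm
      · refine ⟨i+1, by omega, a, ha, ?_⟩
        rw [wl i (by omega), ← mul_assoc, ← mul_assoc, h2 i (by omega), one_mul]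
      · refine ⟨j, hj, t (i-1) * a, hc (i-1) (by omega) a ha, ?_⟩
        have := pr_shift (h.shift j (k+1-j) (by omega)) (i-1-j) (k+1-j) (by omega) le_rfl
        simp only [show i - 1 - j + j = i - 1 by omega, show i - 1 - j + 1 + j = i by omega] at this
        rw [← mul_assoc, ← mul_assoc]
        congr 1

theorem swap_comm' {X : Type} [DecidableEq X] {a b c d : X} (h1 : a ≠ c) (h2 : a ≠ d) (h3 : b ≠ c) (h4 : b ≠ d) :
    Commute (Equiv.swap a b) (Equiv.swap c d) := by
  have := Equiv.mul_swap_eq_swap_mul (Equiv.swap a b) c d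
  rw [Equiv.swap_apply_of_ne_of_ne h1.symm h3.symm, Equiv.swap_apply_of_ne_of_ne h2.symm h4.symm] at this
  exact this

theorem swap_braid {X : Type} [DecidableEq X] {a b c : X} (h1 : a ≠ b) (h2 : b ≠ c) (h3 : a ≠ c) :
    Equiv.swap a b * Equiv.swap b c * Equiv.swap a b = Equiv.swap b c * Equiv.swap a b * Equiv.swap b c := by
  have e1 := Equiv.mul_swap_eq_swap_mul (Equiv.swap a b) b c
  have e2 := Equiv.mul_swap_eq_swap_mul (Equiv.swap b c) a b
  rw [Equiv.swap_apply_right, Equiv.swap_apply_of_ne_of_ne h3.symm h2.symm] at e1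
  rw [Equiv.swap_apply_left, Equiv.swap_apply_of_ne_of_ne h1 h3] at e2
  rw [e1, e2, mul_assoc, Equiv.swap_mul_self, mul_assoc, Equiv.swap_mul_self]

theorem std_circ {n : ℕ} (hn : 7 ≤ n) :
    Circ n (fun i : ZMod n => Equiv.swap i (i+1)) (Equiv.addRight (1 : ZMod n)) where
  comm i j h1 h2 := by
    by_cases e : i = j
    · subst e; exact Commute.refl _
    · exact swap_comm' e (fun h => h1 (by rw [h]; ring)) (fun h => h2 h.symm)
        (fun h => e (add_right_cancel h))
  braid i := swap_braid (dn hn 1 (by ring)).symm (dn hn 1 (by ring)).symm (dn hn 2 (by ring)).symm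
  shift i := by rw [Equiv.mul_swap_eq_swap_mul]; simp
  gen j := by
    have : NeZero n := ⟨by omega⟩
    set s : ℕ → Equiv.Perm (ZMod n) := fun k => Equiv.swap (j+1+(k:ℕ)) (j+1+(k:ℕ)+1) with hs
    have key : ∀ l, l ≤ n - 2 → ∀ m : ℕ, m < n → (Equiv.swap j (j+1) * pr s l) (j + m) =
        if m ≤ l then j + m + 1 else if m = l + 1 then j else j + m := by
      intro l
      induction l with
      | zero =>
        intro _ m hm
        simp only [pr, mul_one]
        by_cases e0 : m = 0
        · subst e0; simp
        by_cases e1 : m = 1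
        · subst e1; simp
        · rw [if_neg (by omega), if_neg (by omega)]
          apply Equiv.swap_apply_of_ne_of_ne
          · intro e; exact nat_ne (n := n) m (by omega) (by omega) (by linear_combination e)
          · intro e; refine nat_ne (n := n) (m-1) (by omega) (by omega) ?_
            rw [Nat.cast_sub (by omega)]; push_cast; linear_combination e
      | succ l ih =>
        intro hl m hm
        have e : Equiv.swap j (j+1) * pr s (l+1) = (Equiv.swap j (j+1) * pr s l) * s l := by
          rw [mul_assoc]; rfl
        rw [e, Equiv.Perm.mul_apply]
        have c1 : j + 1 + (l : ZMod n) = j + ((l+1 : ℕ) : ZMod n) := by push_cast; ring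
        have c2 : j + ((l+1 : ℕ) : ZMod n) + 1 = j + ((l+2 : ℕ) : ZMod n) := by push_cast; ring
        have hsl : s l = Equiv.swap (j + ((l+1 : ℕ) : ZMod n)) (j + ((l+2 : ℕ) : ZMod n)) := by
          simp only [hs]; rw [c1, c2]
        rw [hsl]
        by_cases e1 : m = l + 1
        · subst e1
          rw [Equiv.swap_apply_left, ih (by omega) _ (by omega), if_neg (by omega), if_neg (by omega),
            if_pos le_rfl, c2]
        by_cases e2 : m = l + 2
        · subst e2
          rw [Equiv.swap_apply_right, ih (by omega) _ (by omega), if_neg (by omega), if_pos rfl,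
            if_neg (by omega), if_pos rfl]
        have inj : ∀ a b : ℕ, a < n → b < n → a ≠ b → j + (a : ZMod n) ≠ j + (b : ZMod n) := by
          intro a b ha hb hab e
          have := add_left_cancel e
          rw [ZMod.natCast_eq_natCast_iff'] at this
          rw [Nat.mod_eq_of_lt ha, Nat.mod_eq_of_lt hb] at this
          exact hab this
        rw [Equiv.swap_apply_of_ne_of_ne (inj _ _ (by omega) (by omega) e1) (inj _ _ (by omega) (by omega) e2),
          ih (by omega) _ hm]
        by_cases e3 : m ≤ l
        · rw [if_pos e3, if_pos (by omega)]
        · rw [if_neg e3, if_neg e1, if_neg (by omega), if_neg (by omega)]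
    ext x
    have hx : x = j + ((x - j).val : ℕ) := by rw [ZMod.natCast_zmod_val]; ring
    have hl := (x - j).val_lt
    have n0 : ((n : ℕ) : ZMod n) = 0 := ZMod.natCast_self n
    have k2 := key (n-2) le_rfl (x-j).val hl
    rw [← hx] at k2
    rw [k2]
    split_ifs with a b
    · simp
    · have : (x - j).val = n - 1 := by omega
      rw [this, Nat.cast_sub (by omega), n0] at hx
      push_cast at hx
      simp [hx]
    · omega

theorem Circ.lin {G : Type*} [Group G] {n : ℕ} {S : ZMod n → G} {δ : G} (hn : 7 ≤ n)
    (h : Circ n S δ) : Br (n-1) (fun k => S (k : ℕ)) := by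
  constructor
  · intro i j hij hj
    obtain ⟨d, rfl⟩ : ∃ d, j = i + d := ⟨j - i, by omega⟩
    refine h.comm _ _ ?_ ?_
    · intro e
      refine nat_ne (n := n) (d+1) (by omega) (by omega) ?_
      push_cast at e ⊢; linear_combination e
    · intro e
      refine nat_ne (n := n) (d-1) (by omega) (by omega) ?_
      rw [Nat.cast_sub (by omega)]
      push_cast at e ⊢; linear_combination e
  · intro i _
    have := h.braid (i : ℕ)
    push_cast
    exact this

theorem Circ.mem_all {G : Type*} [Group G] {n : ℕ} {S : ZMod n → G} {δ : G} (hn : 7 ≤ n)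
    (h : Circ n S δ) (N : Subgroup G) (hN : ∀ k : ℕ, k < n - 1 → S k ∈ N) : ∀ i, S i ∈ N := by
  have h0 : S 0 ∈ N := by simpa using hN 0 (by omega)
  have : NeZero n := ⟨by omega⟩
  have hd : (S 0)⁻¹ * δ ∈ N := by
    apply h.gen_mem hn
    intro i hi _
    have := hN i.val ?_
    · rwa [ZMod.natCast_zmod_val] at this
    · have h1 := i.val_lt
      by_contra hcon
      have : i.val = n - 1 := by omega
      apply hi
      rw [← ZMod.natCast_zmod_val i, this, Nat.cast_sub (by omega), ZMod.natCast_self]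
      simp
  have hd' : δ ∈ N := by simpa using N.mul_mem h0 hd
  refine zind hn _ 0 h0 ?_
  intro j hj
  have := h.shift j
  have e : S (j+1) = δ * S j * δ⁻¹ := eq_mul_inv_iff_mul_eq.2 this.symm
  rw [e]
  exact N.mul_mem (N.mul_mem hd' hj) (N.inv_mem hd')

theorem fin_gen {m : ℕ} (N : Subgroup (Equiv.Perm (Fin (m+1))))
    (hN : ∀ i : Fin m, Equiv.swap i.castSucc i.succ ∈ N) : N = ⊤ := by
  have h1 := Equiv.Perm.mclosure_swap_castSucc_succ m
  have h2 : Submonoid.closure (Set.range fun i : Fin m => Equiv.swap i.castSucc i.succ) ≤ N.toSubmonoid := by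
    rw [Submonoid.closure_le]
    rintro _ ⟨i, rfl⟩
    exact hN i
  rw [h1] at h2
  exact eq_top_iff.2 (fun x _ => h2 (Submonoid.mem_top x))

theorem std_gen {n : ℕ} (hn : 7 ≤ n) (N : Subgroup (Equiv.Perm (ZMod n)))
    (hN : ∀ k : ℕ, k < n - 1 → Equiv.swap (k : ZMod n) (k+1) ∈ N) : N = ⊤ := by
  obtain ⟨m, rfl⟩ : ∃ m, n = m + 1 := ⟨n - 1, by omega⟩
  refine fin_gen (m := m) N ?_
  intro i
  have := hN i.val (by have := i.isLt; omega)
  have e1 : ((i.val : ℕ) : ZMod (m+1)) = i.castSucc := by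
    apply ZMod.val_injective
    rw [ZMod.val_natCast, Nat.mod_eq_of_lt (by omega)]; rfl
  have e2 : ((i.val : ℕ) : ZMod (m+1)) + 1 = i.succ := by
    apply ZMod.val_injective
    rw [← Nat.cast_succ, ZMod.val_natCast, Nat.mod_eq_of_lt (by omega)]; rfl
  rw [e2, e1] at this
  exact this

theorem coxeter {H : Type*} [Group H] {n : ℕ} (hn : 7 ≤ n) {S : ZMod n → H} {δ : H}
    (h : Circ n S δ) (h2 : ∀ i, S i * S i = 1) :
    ∃ φ : Equiv.Perm (ZMod n) →* H, ∀ i, φ (Equiv.swap i (i+1)) = S i := by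
  have : NeZero n := ⟨by omega⟩
  let U : ZMod n → Equiv.Perm (ZMod n) × H := fun i => (Equiv.swap i (i+1), S i)
  have hs := std_circ hn
  have prf : ∀ (a : ℕ → Equiv.Perm (ZMod n)) (b : ℕ → H) k,
      pr (fun i => (a i, b i)) k = (pr a k, pr b k) := by
    intro a b k
    induction k with
    | zero => rfl
    | succ k ih => simp only [pr, ih]; rfl
  have hU : Circ n U (Equiv.addRight (1 : ZMod n), δ) := by
    refine ⟨?_, ?_, ?_, ?_⟩
    · intro i j a b; exact Prod.ext (hs.comm i j a b) (h.comm i j a b)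
    · intro i; exact Prod.ext (hs.braid i) (h.braid i)
    · intro i; exact Prod.ext (hs.shift i) (h.shift i)
    · intro j
      simp only [U]
      rw [prf]
      exact Prod.ext (hs.gen j) (h.gen j)
  have hUU : ∀ i, U i * U i = 1 := fun i => Prod.ext (Equiv.swap_mul_self _ _) (h2 i)
  obtain ⟨A, hA, h1, hc⟩ := cox_card (hU.lin hn) (fun i _ => hUU _) (n-1) le_rfl
  rw [Nat.sub_add_cancel (by omega)] at hA
  let Γ : Subgroup (Equiv.Perm (ZMod n) × H) := Subgroup.closure {g | ∃ k : ℕ, k < n - 1 ∧ U k = g}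
  have hΓA : ∀ g ∈ Γ, g ∈ A := by
    intro g hg
    induction hg using Subgroup.closure_induction_left with
    | one => exact h1
    | mul_left x hx y _ ih =>
      obtain ⟨k, hk, rfl⟩ := hx
      exact hc k hk y ih
    | inv_mul_cancel x hx y _ ih =>
      obtain ⟨k, hk, rfl⟩ := hx
      rw [inv_eq_of_mul_eq_one_left (hUU _)]
      exact hc k hk y ih
  have hUΓ : ∀ i, U i ∈ Γ := hU.mem_all hn Γ (fun k hk => Subgroup.subset_closure ⟨k, hk, rfl⟩)
  let f : Γ →* Equiv.Perm (ZMod n) := (MonoidHom.fst _ _).comp Γ.subtype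
  have fsurj : Function.Surjective f := by
    rw [← MonoidHom.range_eq_top]
    apply std_gen hn
    intro k _
    exact ⟨⟨U k, hUΓ k⟩, rfl⟩
  let e : Γ → A := fun g => ⟨g.1, hΓA g.1 g.2⟩
  have einj : Function.Injective e := by
    intro a b hab
    exact Subtype.ext (congrArg (fun z : A => z.1) hab)
  have : Finite Γ := Finite.of_injective e einj
  have hcard : Nat.card Γ ≤ Nat.card (Equiv.Perm (ZMod n)) := by
    have a1 := Nat.card_le_card_of_injective e einj
    have a2 : Nat.card (Equiv.Perm (ZMod n)) = n.factorial := by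
      rw [Nat.card_eq_fintype_card, Fintype.card_perm, ZMod.card]
    have a3 : Nat.card A = A.card := by simp
    omega
  have fbij := fsurj.bijective_of_nat_card_le hcard
  let E := MulEquiv.ofBijective f fbij
  refine ⟨((MonoidHom.snd _ _).comp Γ.subtype).comp E.symm.toMonoidHom, ?_⟩
  intro i
  have : E.symm (Equiv.swap i (i+1)) = ⟨U i, hUΓ i⟩ := by
    rw [MulEquiv.symm_apply_eq]; rfl
  show (E.symm (Equiv.swap i (i+1))).1.2 = S i
  rw [this]


section CaseI
open Equiv

theorem choose_lb (m : ℕ) : ∀ b, 2 ≤ b → b + 2 ≤ m → m * (m-1) ≤ 2 * m.choose b := by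
  induction m with
  | zero => intro b _ h; omega
  | succ m ih =>
    intro b hb hm
    have two : (m+1) * m = 2 * (m+1).choose 2 := by
      have := Nat.triangle_succ m
      rw [Nat.choose_two_right]
      have h2 : 2 ∣ (m+1) * (m+1-1) := (Nat.even_mul_pred_self (m+1)).two_dvd
      rw [Nat.mul_div_cancel' h2]; rfl
    rw [Nat.add_sub_cancel]
    rcases eq_or_ne b 2 with rfl | hb2
    · exact two.le
    rcases eq_or_ne (b+1) m with hbm | hbm
    · rw [two, ← Nat.choose_symm (show b ≤ m + 1 by omega), show m + 1 - b = 2 by omega]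
    · obtain ⟨c, rfl⟩ : ∃ c, b = c + 1 := ⟨b-1, by omega⟩
      have h1 := ih (c+1) (by omega) (by omega)
      have h2 := ih c (by omega) (by omega)
      rw [Nat.choose_succ_succ]
      obtain ⟨k, rfl⟩ : ∃ k, m = k + 4 := ⟨m - 4, by omega⟩
      have : (k+4) * (k+4-1) = (k+4)*(k+3) := rfl
      simp only [Nat.succ_eq_add_one] at *
      nlinarith

theorem comm_three {α : Type} [DecidableEq α] (g h : Perm α) (d : α)
    (hg : g d ≠ d) (hh : h d ≠ d) (hd : ∀ z, z ≠ d → g z = z ∨ h z = z) :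
    g * h * g⁻¹ * h⁻¹ = swap d (g d) * swap (g d) (h d) := by
  have key : g * h = swap d (g d) * swap (g d) (h d) * (h * g) := by
    ext z
    simp only [Perm.mul_apply]
    have hgd : h (g d) = g d := by
      rcases hd (g d) hg with e | e
      · exact absurd (g.injective e) hg
      · exact e
    have hhd : g (h d) = h d := by
      rcases hd (h d) hh with e | e
      · exact e
      · exact absurd (h.injective e) hh
    have ne : g d ≠ h d := by
      intro e; rw [e] at hgd; exact hh (h.injective hgd)
    by_cases zd : z = d
    · subst zd
      rw [hgd, swap_apply_left, swap_apply_of_ne_of_ne hh ne.symm, hhd]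
    rcases hd z zd with e | e
    · rw [e]
      by_cases e2 : h z = d
      · rw [e2, swap_apply_of_ne_of_ne hg.symm hh.symm, swap_apply_left]
      · have n1 : h z ≠ g d := by
          intro e3; rw [← hgd] at e3; have := h.injective e3
          rw [this] at e; exact hg (g.injective e)
        have n2 : h z ≠ h d := fun e3 => zd (h.injective e3)
        rw [swap_apply_of_ne_of_ne n1 n2, swap_apply_of_ne_of_ne e2 n1]
        rcases hd _ e2 with e4 | e4
        · exact e4
        · have := h.injective e4; rw [this, e]
    · rw [e]
      by_cases e2 : g z = d
      · rw [e2, swap_apply_right, swap_apply_right]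
      · have : h (g z) = g z := by
          rcases hd _ e2 with e4 | e4
          · have := g.injective e4; rw [this, e]
          · exact e4
        rw [this]
        have n1 : g z ≠ g d := fun e3 => zd (g.injective e3)
        have n2 : g z ≠ h d := by
          intro e3; rw [← hhd] at e3
          have := g.injective e3
          rw [this] at e; exact hh (h.injective e)
        rw [swap_apply_of_ne_of_ne n1 n2, swap_apply_of_ne_of_ne e2 n1]
  rw [key]; group

theorem bochert {α Y : Type} [DecidableEq α] [Fintype α] [Fintype Y] (hα : 7 ≤ Fintype.card α)
    (hY : Fintype.card Y ≤ 2 * Fintype.card α) (φ : Perm α →* Perm Y) (x : Y) :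
    ∃ i j k : α, i ≠ j ∧ j ≠ k ∧ i ≠ k ∧ φ (swap i j * swap j k) x = x := by
  classical
  let P : Finset α → Prop := fun D => ∀ g, (∀ d ∈ D, g d = d) → φ g x = x → g = 1
  have huniv : P Finset.univ := fun g hg _ => Equiv.ext (fun d => hg d (Finset.mem_univ d))
  obtain ⟨Δ, hΔ, hmin⟩ := Finset.exists_min_image (Finset.univ.filter P) Finset.card
    ⟨Finset.univ, by simp [huniv]⟩
  have hP : P Δ := (Finset.mem_filter.1 hΔ).2
  have hmin' : ∀ D : Finset α, D.card < Δ.card → ∃ g, (∀ d ∈ D, g d = d) ∧ φ g x = x ∧ g ≠ 1 := by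
    intro D hD
    by_contra hc
    push Not at hc
    have := hmin D (by simp only [Finset.mem_filter, Finset.mem_univ, true_and]; exact hc)
    omega
  have hcc := Finset.card_compl_add_card Δ
  by_cases hsz : 2 * Δ.card ≤ Fintype.card α
  · exfalso
    let f : Perm {a // a ∉ Δ} → Y := fun g => φ (Perm.ofSubtype g) x
    have finj : Function.Injective f := by
      intro a b hab
      have : Perm.ofSubtype (b⁻¹ * a) = (1 : Perm α) := by
        apply hP
        · intro d hd
          exact Perm.ofSubtype_apply_of_not_mem _ (by simpa using hd)
        · rw [map_mul, map_inv, map_mul, map_inv, Perm.mul_apply, Perm.inv_eq_iff_eq]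
          exact hab
      have := Perm.ofSubtype_injective (this.trans (map_one _).symm)
      exact (inv_mul_eq_one.1 this).symm
    have h1 := Fintype.card_le_of_injective f finj
    rw [Fintype.card_perm, show Fintype.card {a // a ∉ Δ} = Δᶜ.card by
      rw [Fintype.card_subtype]; congr 1; ext; simp] at h1
    obtain ⟨m, hm⟩ : ∃ m, Δᶜ.card = m + 4 := ⟨Δᶜ.card - 4, by omega⟩
    rw [hm, Nat.factorial_succ] at h1
    have : 6 ≤ (m+3).factorial := (Nat.factorial_le (show 3 ≤ m + 3 by omega))
    nlinarith
  · obtain ⟨g, g1, g2, g3⟩ := hmin' Δᶜ (by omega)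
    obtain ⟨d, hd⟩ : ∃ d, g d ≠ d := by
      by_contra hc; push Not at hc; exact g3 (Equiv.ext hc)
    have hdΔ : d ∈ Δ := by
      by_contra hc; exact hd (g1 d (by simpa using hc))
    obtain ⟨h, h1, h2, h3⟩ := hmin' (Δ.erase d) (Finset.card_erase_lt_of_mem hdΔ)
    have hhd : h d ≠ d := by
      intro e
      apply h3
      apply hP _ _ h2
      intro z hz
      by_cases ez : z = d
      · rw [ez, e]
      · exact h1 z (Finset.mem_erase.2 ⟨ez, hz⟩)
    have hall : ∀ z, z ≠ d → g z = z ∨ h z = z := by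
      intro z hz
      by_cases e : z ∈ Δ
      · exact Or.inr (h1 z (Finset.mem_erase.2 ⟨hz, e⟩))
      · exact Or.inl (g1 z (by simpa using e))
    have hc := comm_three g h d hd hhd hall
    have hgd : h (g d) = g d := by
      rcases hall (g d) hd with e | e
      · exact absurd (g.injective e) hd
      · exact e
    refine ⟨d, g d, h d, hd.symm, ?_, hhd.symm, ?_⟩
    · intro e; rw [e] at hgd; exact hhd (h.injective hgd)
    · rw [← hc]
      have i1 : (φ g)⁻¹ x = x := by rw [Perm.inv_eq_iff_eq]; exact g2.symm
      have i2 : (φ h)⁻¹ x = x := by rw [Perm.inv_eq_iff_eq]; exact h2.symm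
      simp only [map_mul, map_inv, Perm.mul_apply, i1, i2, g2, h2]

section D
variable {α Y : Type} [DecidableEq α] (φ : Perm α →* Perm Y)

theorem D_eq (g : Perm α) (x : Y) (a b : α) :
    φ (swap (g a) (g b)) (φ g x) = φ g (φ (swap a b) x) := by
  rw [← Perm.mul_apply, ← Perm.mul_apply, ← map_mul, ← map_mul, mul_swap_eq_swap_mul]

theorem D_sq (x : Y) (a b : α) : φ (swap a b) (φ (swap a b) x) = x := by
  rw [← Perm.mul_apply, ← map_mul, swap_mul_self, map_one]; rfl

theorem D_tri {x : Y} {i j k : α} (hij : i ≠ j) (hjk : j ≠ k) (hik : i ≠ k)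
    (h : φ (swap i j) x = φ (swap i k) x) : φ (swap j k) x = φ (swap i j) x := by
  have := D_eq φ (swap i j) (φ (swap i j) x) i k
  rw [D_sq, swap_apply_left, swap_apply_of_ne_of_ne hik.symm hjk.symm] at this
  rw [this]
  congr 1
  rw [h, D_sq]

def QQ (i : α) (x : Y) : Set α := {j | j ≠ i ∧ ∃ k, k ≠ i ∧ k ≠ j ∧ φ (swap i j) x = φ (swap i k) x}

theorem QQ_eq (i : α) (x : Y) {j l : α} (hj : j ∈ QQ φ i x) (hl : l ∈ QQ φ i x) :
    φ (swap i j) x = φ (swap i l) x := by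
  obtain ⟨ji, k, ki, kj, e1⟩ := hj
  obtain ⟨li, m, mi, ml, e2⟩ := hl
  by_cases c1 : j = l
  · rw [c1]
  by_cases c2 : j = m
  · rw [c2, e2]
  by_cases c3 : k = l
  · rw [e1, c3]
  by_cases c4 : k = m
  · rw [e1, e2, c4]
  have t1 := D_tri φ ji.symm kj.symm ki.symm e1
  have t2 := D_tri φ li.symm ml.symm mi.symm e2
  have g : φ (swap i l * swap l m) x = x := by
    rw [map_mul, Perm.mul_apply, t2, D_sq]
  set c := swap i l * swap l m with hc
  have ci : c i = l := by
    rw [hc, Perm.mul_apply, swap_apply_of_ne_of_ne li.symm mi.symm, swap_apply_left]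
  have cf : ∀ z, z ≠ i → z ≠ l → z ≠ m → c z = z := by
    intro z a b d
    rw [hc, Perm.mul_apply, swap_apply_of_ne_of_ne b d, swap_apply_of_ne_of_ne a b]
  have f1 := D_eq φ c x i j
  have f2 := D_eq φ c x j k
  rw [ci, cf j ji c1 c2, g] at f1
  rw [cf j ji c1 c2, cf k ki c3 c4, g, t1, ← f1] at f2
  -- now D jk = D lj
  have f3 : φ (swap j i) x = φ (swap j l) x := by
    rw [swap_comm j i, swap_comm j l, f2]
  have := D_tri φ ji li.symm c1 f3
  rw [this, swap_comm]

theorem QQ_equiv (g : Perm α) (i : α) (x : Y) (j : α) (hj : j ∈ QQ φ i x) : g j ∈ QQ φ (g i) (φ g x) := by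
  obtain ⟨ji, k, ki, kj, e1⟩ := hj
  refine ⟨fun h => ji (g.injective h), g k, fun h => ki (g.injective h), fun h => kj (g.injective h), ?_⟩
  rw [D_eq, D_eq, e1]

theorem QQ_iff (g : Perm α) (i : α) (x : Y) (j : α) : g j ∈ QQ φ (g i) (φ g x) ↔ j ∈ QQ φ i x := by
  refine ⟨fun h => ?_, QQ_equiv φ g i x j⟩
  have := QQ_equiv φ g⁻¹ _ _ _ h
  simpa using this

end D

theorem exists_perm_map {α : Type} [DecidableEq α] [Fintype α] (A B : Finset α) (i : α)
    (hA : i ∉ A) (hB : i ∉ B) (h : A.card = B.card) : ∃ g : Perm α, g i = i ∧ ∀ z, g z ∈ B ↔ z ∈ A := by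
  let e : {z // z ∈ A} ≃ {z // z ∈ B} := Fintype.equivOfCardEq (by simpa using h)
  let g := e.extendSubtype
  have hg : ∀ z, g z ∈ B ↔ z ∈ A := by
    intro z
    constructor
    · intro hz
      by_contra hc
      exact e.extendSubtype_not_mem z hc hz
    · exact e.extendSubtype_mem z
  refine ⟨swap (g i) i * g, by simp, ?_⟩
  intro z
  rw [← hg, Perm.mul_apply]
  have h1 : g i ∉ B := fun hh => hA ((hg i).1 hh)
  by_cases c1 : g z = g i
  · rw [c1, swap_apply_left]; exact ⟨fun h => absurd h hB, fun h => absurd h h1⟩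
  by_cases c2 : g z = i
  · rw [c2, swap_apply_right]; exact ⟨fun h => absurd h h1, fun h => absurd h hB⟩
  rw [swap_apply_of_ne_of_ne c1 c2]

theorem caseI_core {α Y : Type} [DecidableEq α] [Fintype α] [Fintype Y] (hα : 7 ≤ Fintype.card α)
    (hY : Fintype.card Y ≤ 2 * Fintype.card α) (φ : Perm α →* Perm Y) (x : Y) :
    ∃ j0 : α, ∃ y : Y, ∀ u v, u ≠ j0 → v ≠ j0 → u ≠ v → φ (swap u v) x = y := by
  classical
  obtain ⟨i, j, k, hij, hjk, hik, hx⟩ := bochert hα hY φ x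
  have e1 : φ (swap i j) x = φ (swap i k) x := by
    have e : φ (swap j k) x = φ (swap i j) x := by
      rw [map_mul, Perm.mul_apply] at hx
      rw [← hx, D_sq, hx]
    have := D_tri φ hij.symm hik hjk (by rw [swap_comm j i, e])
    rw [this, swap_comm]
  let Q : Y → Finset α := fun y => Finset.univ.filter (fun z => z ∈ QQ φ i y)
  have hQ : ∀ y z, z ∈ Q y ↔ z ∈ QQ φ i y := by intro y z; simp [Q]
  have hi : ∀ y, i ∉ Q y := by intro y h; exact ((hQ y i).1 h).1 rfl
  have jQ : j ∈ Q x := (hQ _ _).2 ⟨hij.symm, k, hik.symm, hjk.symm, e1⟩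
  have kQ : k ∈ Q x := (hQ _ _).2 ⟨hik.symm, j, hij.symm, hjk, e1.symm⟩
  have two : 2 ≤ (Q x).card := by
    have := Finset.card_le_card (show ({j, k} : Finset α) ⊆ Q x by
      intro z hz; simp only [Finset.mem_insert, Finset.mem_singleton] at hz
      rcases hz with rfl | rfl <;> assumption)
    rwa [Finset.card_pair hjk] at this
  have hsub : Finset.powersetCard (Q x).card (Finset.univ.erase i) ⊆ Finset.univ.image Q := by
    intro E hE
    rw [Finset.mem_powersetCard] at hE
    have hiE : i ∉ E := fun h => by simpa using hE.1 h
    obtain ⟨g, g1, g2⟩ := exists_perm_map (Q x) E i (hi x) hiE hE.2.symm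
    rw [Finset.mem_image]
    refine ⟨φ g x, Finset.mem_univ _, ?_⟩
    ext z
    obtain ⟨z, rfl⟩ := g.surjective z
    rw [hQ, g2, hQ]
    have := QQ_iff φ g i x z
    rwa [g1] at this
  have hcard := (Finset.card_le_card hsub).trans Finset.card_image_le
  rw [Finset.card_powersetCard, Finset.card_erase_of_mem (Finset.mem_univ _), Finset.card_univ,
    Finset.card_univ] at hcard
  have big : Fintype.card α ≤ (Q x).card + 2 := by
    by_contra hc
    have := choose_lb (Fintype.card α - 1) (Q x).card two (by omega)
    obtain ⟨m, hm⟩ : ∃ m, Fintype.card α = m + 7 := ⟨Fintype.card α - 7, by omega⟩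
    have c2 := hcard.trans hY
    rw [hm] at this c2
    simp only [show m + 7 - 1 = m + 6 from rfl, show m + 6 - 1 = m + 5 from rfl] at this c2
    nlinarith
  have hcompl : ((insert i (Q x))ᶜ).card ≤ 1 := by
    rw [Finset.card_compl, Finset.card_insert_of_notMem (hi x)]; omega
  obtain ⟨j0, hj0⟩ : ∃ j0, ∀ u, u ≠ j0 → u = i ∨ u ∈ Q x := by
    by_cases hc : ∃ j0, j0 ∈ (insert i (Q x))ᶜ
    · obtain ⟨j0, h0⟩ := hc
      refine ⟨j0, fun u hu => ?_⟩
      by_contra hcon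
      exact hu (Finset.card_le_one.1 hcompl u (by simpa using hcon) j0 h0)
    · push Not at hc
      exact ⟨i, fun u _ => by have := hc u; simp only [Finset.mem_compl, Finset.mem_insert, not_not] at this; exact this⟩
  refine ⟨j0, φ (swap i j) x, ?_⟩
  have jQ' := (hQ _ _).1 jQ
  intro u v hu hv huv
  rcases hj0 u hu with rfl | hu
  · rcases hj0 v hv with rfl | hv
    · exact absurd rfl huv
    · exact QQ_eq φ _ x ((hQ _ _).1 hv) jQ'
  · have hu' := (hQ _ _).1 hu
    rcases hj0 v hv with rfl | hv
    · rw [swap_comm]; exact QQ_eq φ _ x hu' jQ'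
    · have hv' := (hQ _ _).1 hv
      rw [D_tri φ hu'.1.symm huv hv'.1.symm (QQ_eq φ _ x hu' hv')]
      exact QQ_eq φ _ x hu' jQ'

theorem caseI {n : ℕ} (hn : 7 ≤ n) {Y : Type} [Fintype Y] (hY : Nat.card Y ≤ 2 * n)
    {S : ZMod n → Perm Y} {δ : Perm Y} (h : Circ n S δ) (h2 : ∀ i, S i * S i = 1) : ∀ x, Good S x := by
  have : NeZero n := ⟨by omega⟩
  intro x
  obtain ⟨φ, hφ⟩ := coxeter hn h h2
  obtain ⟨j0, y, hy⟩ := caseI_core (by rw [ZMod.card]; exact hn)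
    (by rw [ZMod.card, ← Nat.card_eq_fintype_card]; exact hY) φ x
  refine ⟨j0, ?_⟩
  have : ∀ i, i ≠ j0 - 1 → i ≠ j0 → S i x = y := by
    intro i h1 h3
    rw [← hφ]
    exact hy _ _ h3 (fun e => h1 (by rw [← e]; ring)) (dn hn 1 (by ring)).symm
  intro i k a b c d
  rw [this i a b, this k c d]
end CaseI


def presH {X : Type} (p : X → Prop) : Subgroup (Equiv.Perm X) where
  carrier := {g | ∀ x, p (g x) ↔ p x}
  mul_mem' {a b} ha hb x := by
    show p (a (b x)) ↔ p x
    rw [ha, hb]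
  one_mem' x := Iff.rfl
  inv_mem' {a} ha x := by
    have := ha (a⁻¹ x)
    rw [show a (a⁻¹ x) = x from a.apply_symm_apply x] at this
    exact this.symm

def resH {X : Type} (p : X → Prop) : presH p →* Equiv.Perm {x // p x} where
  toFun g := g.1.subtypePerm (fun x => g.2 x)
  map_one' := by ext; rfl
  map_mul' a b := by ext; rfl

theorem covering {X : Type} [Fintype X] {n : ℕ} (hn : 7 ≤ n) (hX : Nat.card X ≤ 2 * n)
    {S : ZMod n → Equiv.Perm X} {δ : Equiv.Perm X} (h : Circ n S δ) : ∀ x, Good S x := by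
  classical
  by_cases hne : ∃ i x, x ∈ BB S i
  · exact big_case hn hX h hne
  push Not at hne
  have hB : ∀ i x, ¬ CC S x → S i (S i x) = x := by
    intro i x hx
    by_contra hc
    refine hne i x (mem_BB.2 ⟨⟨fun e => hc (by rw [e, e]), hc⟩, hx⟩)
  let p : X → Prop := fun x => ¬ CC S x
  have hS : ∀ i, S i ∈ presH p := fun i x => not_congr (CC_iff hn h i x)
  have hδ : δ ∈ presH p := fun x => not_congr (CC_shift h x)
  have h1 : Circ n (fun i => (⟨S i, hS i⟩ : presH p)) ⟨δ, hδ⟩ :=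
    Circ.lift (presH p).subtype (Subgroup.subtype_injective _) h
  have h2 := h1.map (resH p)
  intro x
  by_cases hx : CC S x
  · exact ⟨0, fun i k _ _ _ _ => hx i k⟩
  have h3 := caseI hn ((Nat.card_le_card_of_injective _ Subtype.val_injective).trans hX) h2 ?_ ⟨x, hx⟩
  · obtain ⟨j, hj⟩ := h3
    refine ⟨j, fun i k a b c d => ?_⟩
    exact congrArg Subtype.val (hj i k a b c d)
  · intro i
    ext y
    exact hB i y.1 y.2


section Struct
variable {X : Type} [Fintype X] {n : ℕ} {S : ZMod n → Equiv.Perm X} {δ : Equiv.Perm X}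

def PP (S : ZMod n → Equiv.Perm X) (j : ZMod n) (x : X) : Prop :=
  ∀ i k, i ≠ j - 1 → i ≠ j → k ≠ j - 1 → k ≠ j → S i x = S k x

theorem PP_fwd (hn : 7 ≤ n) (h : Circ n S δ) (j i : ZMod n) (h1 : i ≠ j - 1) (h2 : i ≠ j) (x : X)
    (hx : PP S j x) : PP S j (S i x) := by
  intro k l k1 k2 l1 l2
  obtain ⟨m, m1, m2, m3, m4, m5, m6⟩ := exists_avoid hn (j-1) j (k-1) (k+1) (l-1) (l+1)
  rw [hx i m h1 h2 m1 m2, h.ap m3 m4, h.ap m5 m6, hx k m k1 k2 m1 m2, hx l m l1 l2 m1 m2]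

theorem PP_iff (hn : 7 ≤ n) (h : Circ n S δ) (j i : ZMod n) (h1 : i ≠ j - 1) (h2 : i ≠ j) (x : X) :
    PP S j (S i x) ↔ PP S j x :=
  ⟨inv_of_fwd (S i) (PP S j) (PP_fwd hn h j i h1 h2) x, PP_fwd hn h j i h1 h2 x⟩

theorem PP_adj (hn : 7 ≤ n) (h : Circ n S δ) (j : ZMod n) (x : X) (h1 : PP S j x) (h2 : PP S (j+1) x) :
    CC S x := by
  let E : X → Prop := fun x => PP S j x ∧ PP S (j+1) x
  have jj : j + 1 - 1 = j := by ring
  have n1 : j + 3 ≠ j - 1 := dn hn 4 (by push_cast; ring)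
  have n2 : j + 3 ≠ j := dn hn 3 (by push_cast; ring)
  have n3 : j + 3 ≠ j + 1 := dn hn 2 (by push_cast; ring)
  have n4 : j - 1 ≠ j + 1 := (dn hn 2 (by push_cast; ring)).symm
  have n5 : j - 1 ≠ j := (dn hn 1 (by push_cast; ring)).symm
  set t := S (j+3) with ht
  have hE : ∀ y, E y → ∀ i, i ≠ j → S i y = t y := by
    intro y hy i hi
    by_cases c : i = j - 1
    · rw [c]
      refine hy.2 _ _ ?_ n4 ?_ n3
      · rw [jj]; exact n5
      · rw [jj]; exact n2
    · exact hy.1 _ _ c hi n1 n2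
  have tE : ∀ y, E (t y) ↔ E y := fun y =>
    and_congr (PP_iff hn h _ _ n1 n2 y) (PP_iff hn h _ _ (by rw [jj]; exact n2) n3 y)
  let N : Subgroup (Equiv.Perm X) :=
    { carrier := {g | (∀ y, E y → E (g y)) ∧ (∀ y, E y → E (g⁻¹ y)) ∧ ∀ y, E y → g (t y) = t (g y)}
      mul_mem' := by
        rintro a b ⟨a1, a2, a3⟩ ⟨b1, b2, b3⟩
        refine ⟨fun y hy => a1 _ (b1 _ hy), fun y hy => ?_, fun y hy => ?_⟩
        · rw [mul_inv_rev]; exact b2 _ (a2 _ hy)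
        · show a (b (t y)) = t (a (b y))
          rw [b3 y hy, a3 _ (b1 y hy)]
      one_mem' := ⟨fun y hy => hy, fun y hy => by simpa using hy, fun y _ => rfl⟩
      inv_mem' := by
        rintro a ⟨a1, a2, a3⟩
        refine ⟨a2, fun y hy => by rw [inv_inv]; exact a1 y hy, fun y hy => ?_⟩
        rw [Equiv.Perm.inv_eq_iff_eq, a3 _ (a2 y hy)]
        rw [show a (a⁻¹ y) = y from a.apply_symm_apply y] }
  have hN : ∀ i, i ≠ j → S i ∈ N := by
    intro i hi
    have f1 : ∀ y, E y → E (S i y) := fun y hy => by rw [hE y hy i hi]; exact (tE y).2 hy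
    refine ⟨f1, fun y hy => ?_, fun y hy => ?_⟩
    · apply inv_of_fwd (S i) E f1
      rwa [show S i ((S i)⁻¹ y) = y from (S i).apply_symm_apply y]
    · rw [hE y hy i hi, hE _ ((tE y).2 hy) i hi]
  have hd : δ ∈ N := by
    have a := h.gen_mem hn (j+1) N (fun i hi _ => hN i (by rwa [jj] at hi))
    have b := hN (j+1) (dn hn 1 (by push_cast; ring))
    simpa using N.mul_mem b a
  obtain ⟨d1, d2, d3⟩ := hd
  have key : S j x = t x := by
    have e := h.sh (j-1) (δ⁻¹ x)
    rw [show δ (δ⁻¹ x) = x from δ.apply_symm_apply x, show j - 1 + 1 = j by ring,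
      hE _ (d2 x ⟨h1, h2⟩) _ n5, d3 _ (d2 x ⟨h1, h2⟩),
      show δ (δ⁻¹ x) = x from δ.apply_symm_apply x] at e
    exact e.symm
  have all : ∀ i, S i x = t x := by
    intro i
    by_cases c : i = j
    · rw [c, key]
    · exact hE x ⟨h1, h2⟩ i c
  intro i k
  exact (all i).trans (all k).symm

theorem PP_two (hn : 7 ≤ n) (h : Circ n S δ) (j k : ZMod n) (hjk : j ≠ k) (x : X) (h1 : PP S j x)
    (h2 : PP S k x) : CC S x := by
  by_cases c1 : k = j + 1
  · subst c1; exact PP_adj hn h j x h1 h2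
  by_cases c2 : j = k + 1
  · subst c2; exact PP_adj hn h k x h2 h1
  obtain ⟨m, m1, m2, m3, m4, -, -⟩ := exists_avoid hn (j-1) j (k-1) k k k
  have all : ∀ i, S i x = S m x := by
    intro i
    by_cases c : i = j - 1 ∨ i = j
    · refine h2 _ _ ?_ ?_ m3 m4
      · rintro rfl
        rcases c with c | c
        · exact hjk (by linear_combination -c)
        · exact c1 (by linear_combination c)
      · rintro rfl
        rcases c with c | c
        · exact c2 (by linear_combination -c)
        · exact hjk c.symm
    · push Not at c
      exact h1 _ _ c.1 c.2 m1 m2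
  intro i l
  exact (all i).trans (all l).symm

theorem PP_shift (h : Circ n S δ) (j : ZMod n) (x : X) : PP S (j+1) (δ x) ↔ PP S j x := by
  constructor
  · intro hx i k i1 i2 k1 k2
    apply δ.injective
    rw [h.sh, h.sh]
    apply hx
    · intro e; exact i1 (by linear_combination e)
    · intro e; exact i2 (by linear_combination e)
    · intro e; exact k1 (by linear_combination e)
    · intro e; exact k2 (by linear_combination e)
  · intro hx i k i1 i2 k1 k2
    have a := h.sh (i-1) x
    have b := h.sh (k-1) x
    rw [sub_add_cancel] at a b
    rw [← a, ← b]
    congr 1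
    apply hx
    · intro e; exact i1 (by linear_combination e)
    · intro e; exact i2 (by linear_combination e)
    · intro e; exact k1 (by linear_combination e)
    · intro e; exact k2 (by linear_combination e)

theorem PP_up (hn : 7 ≤ n) (h : Circ n S δ) (j : ZMod n) (x : X) : PP S (j+1) (S j x) ↔ PP S j x := by
  have g := h.gen_mem hn j (presH (PP S j)) (fun i i1 i2 x => PP_iff hn h j i i1 i2 x)
  have g2 := (presH (PP S j)).inv_mem g
  have e : S j x = δ (((S j)⁻¹ * δ)⁻¹ x) := by
    rw [← Equiv.Perm.mul_apply]; congr 1; group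
  rw [e, PP_shift h, g2 x]

theorem PP_down (hn : 7 ≤ n) (hX : Nat.card X ≤ 2 * n) (h : Circ n S δ) (j : ZMod n) (x : X)
    (hc : ¬ CC S x) (hx : PP S (j+1) x) : PP S j (S j x) := by
  obtain ⟨k, hk⟩ := covering hn hX h (S j x)
  change PP S k (S j x) at hk
  by_cases c1 : k = j
  · rwa [c1] at hk
  exfalso
  by_cases c2 : k = j + 1
  · rw [c2, PP_up hn h] at hk
    exact hc (PP_two hn h _ _ (dn hn 1 (by push_cast; ring)).symm x hk hx)
  · rw [PP_iff hn h k j (fun e => c2 (by rw [e]; ring)) (Ne.symm c1)] at hk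
    exact hc (PP_two hn h _ _ c2 x hk hx)

theorem idx_exists (hn : 7 ≤ n) (hX : Nat.card X ≤ 2 * n) (h : Circ n S δ) :
    ∃ idx : X → ZMod n, (∀ x, ¬ CC S x → PP S (idx x) x) ∧
      (∀ x, ¬ CC S x → idx (δ x) = idx x + 1) ∧
      (∀ i x, ¬ CC S x → idx (S i x) = Equiv.swap i (i+1) (idx x)) := by
  choose idx hidx using covering hn hX h
  change ∀ x, PP S (idx x) x at hidx
  have uniq : ∀ x, ¬ CC S x → ∀ j, PP S j x → idx x = j := by
    intro x hx j hj
    by_contra hc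
    exact hx (PP_two hn h _ _ hc x (hidx x) hj)
  refine ⟨idx, fun x _ => hidx x, fun x hx => ?_, fun i x hx => ?_⟩
  · exact uniq _ (fun e => hx ((CC_shift h x).1 e)) _ ((PP_shift h _ _).2 (hidx x))
  · apply uniq _ (fun e => hx ((CC_iff hn h i x).1 e))
    by_cases c1 : idx x = i
    · rw [c1, Equiv.swap_apply_left, PP_up hn h, ← c1]; exact hidx x
    by_cases c2 : idx x = i + 1
    · rw [c2, Equiv.swap_apply_right]
      exact PP_down hn hX h i x hx (c2 ▸ hidx x)
    · rw [Equiv.swap_apply_of_ne_of_ne c1 c2, PP_iff hn h _ _ (fun e => c2 (by rw [e]; ring)) (Ne.symm c1)]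
      exact hidx x
end Struct


section Trich
variable {X : Type} [Fintype X] {n : ℕ} {S : ZMod n → Equiv.Perm X} {δ : Equiv.Perm X}

theorem two_fix {X : Type} [DecidableEq X] {F : Finset X} (hF : F.card = 2) (g : Equiv.Perm X) {x y : X} (hx : x ∈ F) (hy : y ∈ F)
    (hgy : g y ∈ F) (e : g x = x) : g y = y := by
  by_contra hc
  have hxy : x ≠ y := by rintro rfl; exact hc e
  have hgx : g y ≠ x := fun h => hxy (g.injective (e.trans h.symm))
  have : ({x, y, g y} : Finset X) ⊆ F := by
    intro z hz
    simp only [Finset.mem_insert, Finset.mem_singleton] at hz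
    rcases hz with rfl | rfl | rfl <;> assumption
  have h2 := Finset.card_le_card this
  rw [Finset.card_eq_three.2 ⟨x, y, g y, hxy, hgx.symm, Ne.symm hc, rfl⟩] at h2
  omega

theorem two_or {X : Type} [DecidableEq X] {F : Finset X} (hF : F.card = 2) {x y z : X} (hx : x ∈ F) (hy : y ∈ F)
    (hz : z ∈ F) (e : x ≠ y) : z = x ∨ z = y := by
  by_contra hc
  push Not at hc
  have : ({x, y, z} : Finset X) ⊆ F := by
    intro w hw
    simp only [Finset.mem_insert, Finset.mem_singleton] at hw
    rcases hw with rfl | rfl | rfl <;> assumption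
  have h2 := Finset.card_le_card this
  rw [Finset.card_eq_three.2 ⟨x, y, z, e, hc.1.symm, hc.2.symm, rfl⟩] at h2
  omega

def PW (S : ZMod n → Equiv.Perm X) : ℕ → X → X
  | 0, x => x
  | (j+1), x => S (j : ℕ) (PW S j x)

theorem PW_inj (S : ZMod n → Equiv.Perm X) (j : ℕ) (x y : X) (h : PW S j x = PW S j y) : x = y := by
  induction j with
  | zero => exact h
  | succ j ih => exact ih ((S _).injective h)

theorem zcast_inj {a b : ℕ} (ha : a < n) (hb : b < n) (e : (a : ZMod n) = b) : a = b := by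
  rw [ZMod.natCast_eq_natCast_iff', Nat.mod_eq_of_lt ha, Nat.mod_eq_of_lt hb] at e
  exact e

set_option maxHeartbeats 1000000 in
theorem trich (hn : 7 ≤ n) (hX : Nat.card X = 2 * n) (h : Circ n S δ) :
    (∀ x, CC S x) ∨
    (∃ p : ZMod n → X, Function.Injective p ∧ (∀ j, ¬ CC S (p j)) ∧
      (∀ i j, S i (p j) = p (Equiv.swap i (i+1) j)) ∧ Nat.card {x // CC S x} = n) ∨
    (∃ P : ℕ → Bool → X, ∃ τ ε : Bool,
      (∀ j k b c, j < n → k < n → P j b = P k c → j = k ∧ b = c) ∧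
      (∀ i j b, i + 1 < n → j < n → j ≠ i → j ≠ i + 1 → S (i:ℕ) (P j b) = P j (xor b τ)) ∧
      (∀ i b, i + 1 < n → S (i:ℕ) (P i b) = P (i+1) b) ∧
      (∀ i b, i + 1 < n → S (i:ℕ) (P (i+1) b) = P i (xor b ε))) := by
  classical
  have : NeZero n := ⟨by omega⟩
  obtain ⟨idx, hP, hδ, hS⟩ := idx_exists hn hX.le h
  let F : ZMod n → Finset X := fun j => Finset.univ.filter (fun x => ¬ CC S x ∧ idx x = j)
  have mF : ∀ j x, x ∈ F j ↔ ¬ CC S x ∧ idx x = j := by intro j x; simp [F]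
  have Fδ : ∀ j, (F (j+1)).card = (F j).card := by
    intro j
    symm
    refine Finset.card_bij (fun x _ => δ x) ?_ (fun a _ b _ e => δ.injective e) ?_
    · intro x hx
      rw [mF] at hx ⊢
      exact ⟨fun e => hx.1 ((CC_shift h x).1 e), by rw [hδ x hx.1, hx.2]⟩
    · intro y hy
      refine ⟨δ⁻¹ y, ?_, δ.apply_symm_apply y⟩
      obtain ⟨x, rfl⟩ := δ.surjective y
      rw [mF] at hy
      have hx : ¬ CC S x := fun e => hy.1 ((CC_shift h x).2 e)
      rw [show δ⁻¹ (δ x) = x from δ.symm_apply_apply x, mF]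
      refine ⟨hx, ?_⟩
      rw [hδ x hx] at hy
      exact add_right_cancel hy.2
  have Fc : ∀ j, (F j).card = (F 0).card :=
    zind hn (fun j => (F j).card = (F 0).card) 0 rfl (fun j hj => by rw [Fδ, hj])
  set f := (F 0).card with hf
  have hcount : (Finset.univ.filter (fun x => ¬ CC S x)).card = n * f := by
    rw [Finset.card_eq_sum_card_fiberwise (f := idx) (t := Finset.univ) (fun x _ => Finset.mem_univ _)]
    rw [Finset.sum_congr rfl (g := fun _ => f)]
    · simp [ZMod.card]
    · intro j _
      rw [← Fc j]
      congr 1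
      ext x; simp [F]
  have hsum : (Finset.univ.filter (fun x => CC S x)).card + n * f = 2 * n := by
    rw [← hcount, ← hX, Nat.card_eq_fintype_card, Finset.card_filter_add_card_filter_not]; rfl
  have hf2 : f ≤ 2 := by
    by_contra hc
    have : n * 3 ≤ n * f := Nat.mul_le_mul_left n (by omega)
    omega
  have nC : ∀ i x, ¬ CC S x → ¬ CC S (S i x) := fun i x hx e => hx ((CC_iff hn h i x).1 e)
  rcases (show f = 0 ∨ f = 1 ∨ f = 2 by omega) with f0 | f1 | f2
  · left
    intro x
    by_contra hc
    have : x ∈ F (idx x) := (mF _ _).2 ⟨hc, rfl⟩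
    have h0 := Fc (idx x)
    rw [f0, Finset.card_eq_zero] at h0
    rw [h0] at this; simp at this
  · right; left
    have : ∀ j, ∃ p, F j = {p} := fun j => Finset.card_eq_one.1 ((Fc j).trans f1)
    choose p hp using this
    have hpF : ∀ j, ¬ CC S (p j) ∧ idx (p j) = j := fun j => (mF _ _).1 (by rw [hp]; simp)
    refine ⟨p, ?_, fun j => (hpF j).1, ?_, ?_⟩
    · intro a b e
      rw [← (hpF a).2, ← (hpF b).2, e]
    · intro i j
      have : S i (p j) ∈ F (Equiv.swap i (i+1) j) :=
        (mF _ _).2 ⟨nC _ _ (hpF j).1, by rw [hS _ _ (hpF j).1, (hpF j).2]⟩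
      rwa [hp, Finset.mem_singleton] at this
    · rw [Nat.card_eq_fintype_card, Fintype.card_subtype]
      rw [f1] at hsum; omega
  · right; right
    have c0 : ∀ x, ¬ CC S x := by
      intro x hx
      have : (Finset.univ.filter (fun x => CC S x)).card = 0 := by rw [f2] at hsum; omega
      rw [Finset.card_eq_zero] at this
      have h2 : x ∈ Finset.univ.filter (fun x => CC S x) := by simp [hx]
      rw [this] at h2; simp at h2
    have F2 : ∀ j, (F j).card = 2 := fun j => (Fc j).trans f2
    have mF' : ∀ j x, x ∈ F j ↔ idx x = j := fun j x => by rw [mF]; exact ⟨fun a => a.2, fun a => ⟨c0 x, a⟩⟩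
    have hS' : ∀ i x, idx (S i x) = Equiv.swap i (i+1) (idx x) := fun i x => hS i x (c0 x)
    have hS0 : ∀ i x, i ≠ idx x - 1 → i ≠ idx x → idx (S i x) = idx x := by
      intro i x a b
      rw [hS', Equiv.swap_apply_of_ne_of_ne b.symm (fun e => a (by rw [e]; ring))]
    -- type τ
    have TA : ∀ j, (∃ x i, idx x = j ∧ i ≠ j - 1 ∧ i ≠ j ∧ S i x = x) →
        ∀ x i, idx x = j → i ≠ j - 1 → i ≠ j → S i x = x := by
      rintro j ⟨x, i, rfl, a, b, e⟩ y k hy c d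
      have e2 : S k x = x := (hP x (c0 x) i k a b c d).symm.trans e
      refine two_fix (F2 (idx x)) (S k) ((mF' _ _).2 rfl) ((mF' _ _).2 hy) ?_ e2
      rw [mF', hS0 k y (by rwa [hy]) (by rwa [hy]), hy]
    have TAs : ∀ j, (∀ x i, idx x = j → i ≠ j - 1 → i ≠ j → S i x = x) →
        ∀ x i, idx x = j + 1 → i ≠ j + 1 - 1 → i ≠ j + 1 → S i x = x := by
      intro j hj x i hx a b
      obtain ⟨y, rfl⟩ := δ.surjective x
      rw [hδ y (c0 y)] at hx
      have := h.sh (i-1) y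
      rw [sub_add_cancel] at this
      rw [← this, hj y (i-1) (add_right_cancel hx) (fun e => a (by linear_combination e))
        (fun e => b (by linear_combination e))]
    have TAall : ∀ x i, i ≠ idx x - 1 → i ≠ idx x → S i x = x →
        ∀ y k, k ≠ idx y - 1 → k ≠ idx y → S k y = y := by
      intro x i a b e
      have := zind hn (fun j => ∀ x i, idx x = j → i ≠ j - 1 → i ≠ j → S i x = x) (idx x)
        (TA _ ⟨x, i, rfl, a, b, e⟩) TAs
      intro y k c d
      exact this (idx y) y k rfl c d
    obtain ⟨τ, hτ⟩ : ∃ τ : Bool, ∀ x i, i ≠ idx x - 1 → i ≠ idx x → (S i x = x ↔ τ = false) := by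
      by_cases c : ∃ x i, i ≠ idx x - 1 ∧ i ≠ idx x ∧ S i x = x
      · obtain ⟨x, i, a, b, e⟩ := c
        exact ⟨false, fun y k c d => iff_of_true (TAall x i a b e y k c d) rfl⟩
      · push Not at c
        exact ⟨true, fun y k d e => iff_of_false (c y k d e) (by simp)⟩
    -- type ε
    have sq : ∀ i x, idx x = i → idx (S i (S i x)) = i := by
      intro i x hx
      rw [hS', hS', hx, Equiv.swap_apply_left, Equiv.swap_apply_right]
    have EA : ∀ j, (∃ x, idx x = j ∧ S j (S j x) = x) → ∀ x, idx x = j → S j (S j x) = x := by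
      rintro j ⟨x, hx, e⟩ y hy
      exact two_fix (F2 j) (S j * S j) ((mF' _ _).2 hx) ((mF' _ _).2 hy) ((mF' _ _).2 (sq j y hy)) e
    have EAs : ∀ j, (∀ x, idx x = j → S j (S j x) = x) →
        ∀ x, idx x = j + 1 → S (j+1) (S (j+1) x) = x := by
      intro j hj x hx
      obtain ⟨y, rfl⟩ := δ.surjective x
      rw [hδ y (c0 y)] at hx
      rw [← h.sh, ← h.sh, hj y (add_right_cancel hx)]
    obtain ⟨ε, hε⟩ : ∃ ε : Bool, ∀ x, (S (idx x) (S (idx x) x) = x ↔ ε = false) := by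
      by_cases c : ∃ x, S (idx x) (S (idx x) x) = x
      · obtain ⟨x, e⟩ := c
        have := zind hn (fun j => ∀ x, idx x = j → S j (S j x) = x) (idx x) (EA _ ⟨x, rfl, e⟩) EAs
        exact ⟨false, fun y => iff_of_true (this (idx y) y rfl) rfl⟩
      · push Not at c
        exact ⟨true, fun y => iff_of_false (c y) (by simp)⟩
    obtain ⟨x0, x1, h01, hF0⟩ := Finset.card_eq_two.1 (F2 0)
    let P : ℕ → Bool → X := fun j b => PW S j (if b then x1 else x0)
    have idxP : ∀ j b, j < n → idx (P j b) = (j : ℕ) := by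
      intro j b
      induction j with
      | zero =>
        intro _
        simp only [Nat.cast_zero]
        rw [← mF', hF0]
        cases b <;> simp [P, PW]
      | succ j ih =>
        intro hj
        show idx (S (j:ℕ) (P j b)) = _
        rw [hS', ih (by omega), Equiv.swap_apply_left]; push_cast; rfl
    have Pne : ∀ j b c, P j b = P j c → b = c := by
      intro j b c e
      have e2 := PW_inj S j _ _ e
      cases b <;> cases c
      · rfl
      · exact absurd e2 h01
      · exact absurd e2.symm h01
      · rfl
    have Por : ∀ j b z, j < n → idx z = (j:ℕ) → z = P j b ∨ z = P j (!b) := by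
      intro j b z hj hz
      refine two_or (F2 (j:ℕ)) ((mF' _ _).2 (idxP j _ hj)) ((mF' _ _).2 (idxP j _ hj)) ((mF' _ _).2 hz) ?_
      intro e
      have := Pne _ _ _ e
      cases b <;> simp at this
    have Pxor : ∀ j b z (t : Bool), j < n → idx z = (j:ℕ) → (z = P j b ↔ t = false) → z = P j (xor b t) := by
      intro j b z t hj hz ht
      cases t
      · simpa using ht
      · rcases Por j b z hj hz with e | e
        · exact absurd (ht.1 e) (by simp)
        · rw [e]; cases b <;> rfl
    refine ⟨P, τ, ε, ?_, ?_, fun i b _ => rfl, ?_⟩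
    · intro j k b c hj hk e
      have : j = k := by
        apply zcast_inj hj hk
        rw [← idxP j b hj, e, idxP k c hk]
      subst this
      exact ⟨rfl, Pne _ _ _ e⟩
    · intro i j b hi hj hij hij'
      have n1 : (i : ZMod n) ≠ idx (P j b) := by
        rw [idxP j b hj]; intro e; exact hij (zcast_inj (by omega) hj e).symm
      have n2 : (i : ZMod n) ≠ idx (P j b) - 1 := by
        rw [idxP j b hj]; intro e
        refine hij' (zcast_inj (n := n) hj hi ?_)
        push_cast; linear_combination -e
      apply Pxor j b _ τ hj
      · rw [hS0 _ _ n2 n1, idxP j b hj]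
      · exact hτ _ _ n2 n1
    · intro i b hi
      have hi' : i < n := by omega
      have e := hε (P i b)
      rw [idxP i b hi'] at e
      apply Pxor i b _ ε hi' _ e
      exact sq _ _ (idxP i b hi')
end Trich


section Final
open Equiv

theorem conj_of {X : Type} (s t u : Perm X) (h : ∀ y, s (u y) = u (t y)) : s = u * t * u⁻¹ := by
  rw [eq_mul_inv_iff_mul_eq]
  exact Equiv.ext h

theorem three_fix {X : Type} {a b c : Perm X} {w : X} (h1 : c w = w) (h2 : b w = w) (h3 : a w = w) :
    (a * b * c) w = w := by
  rw [Perm.mul_apply, Perm.mul_apply, h1, h2, h3]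

def lab (n : ℕ) (j : ℕ) (hj : j < n) (b : Bool) : Fin (2 * n) :=
  if b then ⟨n + j, by omega⟩ else ⟨j, by omega⟩

theorem lab_cases {n : ℕ} (y : Fin (2 * n)) : ∃ j hj b, y = lab n j hj b := by
  by_cases h : y.val < n
  · exact ⟨y.val, h, false, rfl⟩
  · exact ⟨y.val - n, by omega, true, by ext; simp [lab]; omega⟩

theorem lab_val (n j : ℕ) (hj : j < n) (b : Bool) : (lab n j hj b).val = j + n * b.toNat := by
  cases b <;> simp [lab]; omega

theorem lab_ne {n j k : ℕ} (hj : j < n) (hk : k < n) (b c : Bool) (h : j ≠ k) : lab n j hj b ≠ lab n k hk c := by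
  intro e
  have := congrArg Fin.val e
  cases b <;> cases c <;> simp [lab] at this <;> omega

theorem lab_nb {n j k : ℕ} (hj : j < n) (hk : k < n) (b c : Bool) (h : b ≠ c) : lab n j hj b ≠ lab n k hk c := by
  intro e
  have := congrArg Fin.val e
  cases b <;> cases c <;> simp [lab] at this h <;> omega

theorem lab_perm {n : ℕ} {X : Type} [Fintype X] (hX : Nat.card X = 2 * n) (Q : ℕ → Bool → X)
    (hQ : ∀ j k b c, j < n → k < n → Q j b = Q k c → j = k ∧ b = c) :
    ∃ u : Fin (2*n) ≃ X, ∀ j hj b, u (lab n j hj b) = Q j b := by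
  choose f1 f2 f3 f4 using lab_cases (n := n)
  let v : Fin (2*n) → X := fun y => Q (f1 y) (f3 y)
  have hv : Function.Injective v := by
    intro a b e
    obtain ⟨e1, e2⟩ := hQ _ _ _ _ (f2 a) (f2 b) e
    rw [f4 a, f4 b]
    simp only [e1, e2]
  have hb : Function.Bijective v := by
    rw [Fintype.bijective_iff_injective_and_card]
    refine ⟨hv, ?_⟩
    rw [← Nat.card_eq_fintype_card (α := X), hX, Fintype.card_fin]
  refine ⟨Equiv.ofBijective v hb, ?_⟩
  intro j hj b
  show Q (f1 _) (f3 _) = Q j b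
  have := f4 (lab n j hj b)
  have e1 : f1 (lab n j hj b) = j := by
    by_contra hc
    exact lab_ne _ _ _ _ hc this.symm
  have e2 : f3 (lab n j hj b) = b := by
    by_contra hc
    exact lab_nb _ _ _ _ hc this.symm
  rw [e1, e2]

theorem tw_self {n j : ℕ} (hj : j < n) (b : Bool) : tw n ⟨j, hj⟩ (lab n j hj b) = lab n j hj (!b) := by
  cases b
  · exact swap_apply_left _ _
  · exact swap_apply_right _ _

theorem tw_ne {n j k : ℕ} (hj : j < n) (hk : k < n) (b : Bool) (h : j ≠ k) :
    tw n ⟨k, hk⟩ (lab n j hj b) = lab n j hj b :=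
  swap_apply_of_ne_of_ne (lab_ne hj hk b false h) (lab_ne hj hk b true h)

theorem tw_list {n j : ℕ} (hj : j < n) (c : Fin n → Prop) [DecidablePred c] (l : List (Fin n)) (hl : l.Nodup) (b : Bool) :
    (l.map (fun k : Fin n => if c k then tw n k else 1)).prod (lab n j hj b) =
      lab n j hj (if (⟨j, hj⟩ : Fin n) ∈ l ∧ c ⟨j, hj⟩ then !b else b) := by
  induction l with
  | nil => simp
  | cons a l ih =>
    rw [List.nodup_cons] at hl
    rw [List.map_cons, List.prod_cons, Perm.mul_apply, ih hl.2]
    by_cases ha : a = ⟨j, hj⟩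
    · subst ha
      by_cases hc : c ⟨j, hj⟩
      · simp [hc, hl.1, tw_self]
      · simp [hc]
    · have : ∀ b', (if c a then tw n a else 1) (lab n j hj b') = lab n j hj b' := by
        intro b'
        split_ifs
        · exact tw_ne hj a.2 b' (fun e => ha (Fin.ext e.symm))
        · rfl
      rw [this]
      congr 1
      have : (⟨j, hj⟩ : Fin n) ∈ a :: l ↔ (⟨j, hj⟩ : Fin n) ∈ l := by
        rw [List.mem_cons]; exact ⟨fun h => h.resolve_left (fun e => ha e.symm), Or.inr⟩
      simp only [this]

theorem lowTw_lab {n j : ℕ} (hj : j < n) (i : Fin (n-1)) (b : Bool) :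
    lowTw n i (lab n j hj b) = lab n j hj (if j < i then !b else b) := by
  unfold lowTw
  rw [tw_list hj (fun k => k.val < i.val) _ (List.nodup_finRange n)]
  simp

theorem highTw_lab {n j : ℕ} (hj : j < n) (i : Fin (n-1)) (b : Bool) :
    highTw n i (lab n j hj b) = lab n j hj (if i + 2 ≤ j then !b else b) := by
  unfold highTw
  rw [tw_list hj (fun k => i.val + 2 ≤ k.val) _ (List.nodup_finRange n)]
  simp

theorem L1_a {n i : ℕ} (hi : i < n - 1) (b : Bool) :
    linL1Gen n ⟨i, hi⟩ (lab n i (by omega) b) = lab n (i+1) (by omega) (!b) := by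
  cases b <;> simp [linL1Gen, cyc4, lab, swap_apply_def, Fin.ext_iff] <;> split_ifs <;> simp_all <;> omega

theorem L1_b {n i : ℕ} (hi : i < n - 1) (b : Bool) :
    linL1Gen n ⟨i, hi⟩ (lab n (i+1) (by omega) b) = lab n i (by omega) b := by
  cases b <;> simp [linL1Gen, cyc4, lab, swap_apply_def, Fin.ext_iff] <;> split_ifs <;> simp_all <;> omega

theorem L1_c {n i j : ℕ} (hi : i < n - 1) (hj : j < n) (h1 : j ≠ i) (h2 : j ≠ i + 1) (b : Bool) :
    linL1Gen n ⟨i, hi⟩ (lab n j hj b) = lab n j hj b := by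
  unfold linL1Gen cyc4
  have a1 := lab_ne hj (show i < n by omega) b false h1
  have a2 := lab_ne hj (show i < n by omega) b true h1
  have a3 := lab_ne hj (show i + 1 < n by omega) b false h2
  have a4 := lab_ne hj (show i + 1 < n by omega) b true h2
  have e1 := swap_apply_of_ne_of_ne a1 a4
  have e2 := swap_apply_of_ne_of_ne a1 a2
  have e3 := swap_apply_of_ne_of_ne a1 a3
  exact three_fix e1 e2 e3

def mid3 (n : ℕ) (i : Fin (n-1)) : Perm (Fin (2*n)) :=
  (Equiv.swap ⟨i, by have := i.isLt; omega⟩ ⟨n + i + 1, by have := i.isLt; omega⟩ *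
     Equiv.swap ⟨(i : ℕ) + 1, by have := i.isLt; omega⟩ ⟨n + i, by have := i.isLt; omega⟩)

theorem L3_a {n i : ℕ} (hi : i < n - 1) (b : Bool) :
    mid3 n ⟨i, hi⟩ (lab n i (by omega) b) = lab n (i+1) (by omega) (!b) := by
  have hi1 : i < n := by omega
  have hi2 : i + 1 < n := by omega
  cases b
  · exact (congrArg _ (swap_apply_of_ne_of_ne (lab_ne hi1 hi2 false false (by omega))
      (lab_nb hi1 hi1 false true (by simp)))).trans (swap_apply_left _ _)
  · exact (congrArg _ (swap_apply_right _ _)).trans (swap_apply_of_ne_of_ne (lab_ne hi2 hi1 false false (by omega))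
      (lab_nb hi2 hi2 false true (by simp)))

theorem L3_b {n i : ℕ} (hi : i < n - 1) (b : Bool) :
    mid3 n ⟨i, hi⟩ (lab n (i+1) (by omega) b) = lab n i (by omega) (!b) := by
  have hi1 : i < n := by omega
  have hi2 : i + 1 < n := by omega
  cases b
  · exact (congrArg _ (swap_apply_left _ _)).trans (swap_apply_of_ne_of_ne (lab_nb hi1 hi1 true false (by simp))
      (lab_ne hi1 hi2 true true (by omega)))
  · exact (congrArg _ (swap_apply_of_ne_of_ne (lab_nb hi2 hi2 true false (by simp))
      (lab_ne hi2 hi1 true true (by omega)))).trans (swap_apply_right _ _)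

theorem L3_c {n i j : ℕ} (hi : i < n - 1) (hj : j < n) (h1 : j ≠ i) (h2 : j ≠ i + 1) (b : Bool) :
    mid3 n ⟨i, hi⟩ (lab n j hj b) = lab n j hj b := by
  unfold mid3
  have a1 := lab_ne hj (show i < n by omega) b false h1
  have a2 := lab_ne hj (show i < n by omega) b true h1
  have a3 := lab_ne hj (show i + 1 < n by omega) b false h2
  have a4 := lab_ne hj (show i + 1 < n by omega) b true h2
  exact (congrArg _ (swap_apply_of_ne_of_ne a3 a2)).trans (swap_apply_of_ne_of_ne a1 a4)

theorem dbl_f {n j : ℕ} (hj : j < n) (p q : Perm (Fin n)) :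
    dbl n p q (lab n j hj false) = lab n (p ⟨j, hj⟩).val (p ⟨j, hj⟩).isLt false := by
  have e : lab n j hj false = (finSumFinEquiv.trans (finCongr (two_mul n).symm)) (Sum.inl ⟨j, hj⟩) := by
    ext; simp [lab]
  unfold dbl
  rw [e, Equiv.permCongr_apply, Equiv.symm_apply_apply]
  ext; simp [lab]

theorem dbl_t {n j : ℕ} (hj : j < n) (p q : Perm (Fin n)) :
    dbl n p q (lab n j hj true) = lab n (q ⟨j, hj⟩).val (q ⟨j, hj⟩).isLt true := by
  have e : lab n j hj true = (finSumFinEquiv.trans (finCongr (two_mul n).symm)) (Sum.inr ⟨j, hj⟩) := by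
    ext; simp [lab, add_comm]
  unfold dbl
  rw [e, Equiv.permCongr_apply, Equiv.symm_apply_apply]
  ext; simp [lab, add_comm]

theorem std_a {n i : ℕ} (hi : i < n - 1) : stdGen n ⟨i, hi⟩ ⟨i, by omega⟩ = ⟨i+1, by omega⟩ :=
  swap_apply_left _ _
theorem std_b {n i : ℕ} (hi : i < n - 1) : stdGen n ⟨i, hi⟩ ⟨i+1, by omega⟩ = ⟨i, by omega⟩ :=
  swap_apply_right _ _
theorem std_c {n i j : ℕ} (hi : i < n - 1) (hj : j < n) (h1 : j ≠ i) (h2 : j ≠ i + 1) :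
    stdGen n ⟨i, hi⟩ ⟨j, hj⟩ = ⟨j, hj⟩ :=
  swap_apply_of_ne_of_ne (fun e => h1 (congrArg Fin.val e)) (fun e => h2 (congrArg Fin.val e))

theorem mk_conj {n : ℕ} (Q : ℕ → Bool → Fin (2*n))
    (hQ : ∀ j k b c, j < n → k < n → Q j b = Q k c → j = k ∧ b = c) (s t : Fin (n-1) → Perm (Fin (2*n)))
    (hst : ∀ i j (hj : j < n) b, ∃ j', ∃ hj' : j' < n, ∃ b', t i (lab n j hj b) = lab n j' hj' b' ∧ s i (Q j b) = Q j' b') :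
    ∃ u : Perm (Fin (2*n)), ∀ i, s i = u * t i * u⁻¹ := by
  obtain ⟨u, hu⟩ := lab_perm (n := n) (X := Fin (2*n)) (by simp) Q hQ
  refine ⟨u, fun i => conj_of _ _ _ ?_⟩
  intro y
  obtain ⟨j, hj, b, rfl⟩ := lab_cases y
  obtain ⟨j', hj', b', e1, e2⟩ := hst i j hj b
  rw [e1, hu, hu, e2]

theorem conc2 {n : ℕ} (P : ℕ → Bool → Fin (2*n)) (τ ε : Bool) (s : Fin (n-1) → Perm (Fin (2*n)))
    (hP : ∀ j k b c, j < n → k < n → P j b = P k c → j = k ∧ b = c)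
    (h1 : ∀ i (hi : i < n - 1) j b, j < n → j ≠ i → j ≠ i + 1 → s ⟨i, hi⟩ (P j b) = P j (xor b τ))
    (h2 : ∀ i (hi : i < n - 1) b, s ⟨i, hi⟩ (P i b) = P (i+1) b)
    (h3 : ∀ i (hi : i < n - 1) b, s ⟨i, hi⟩ (P (i+1) b) = P i (xor b ε)) :
      (∃ u : Equiv.Perm (Fin (2 * n)),
        ∀ i : Fin (n - 1), s i = u * dbl n (stdGen n i) (stdGen n i) * u⁻¹) ∨
      (∃ u : Equiv.Perm (Fin (2 * n)), ∀ i : Fin (n - 1), s i = u * linL1Gen n i * u⁻¹) ∨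
      (∃ u : Equiv.Perm (Fin (2 * n)), ∀ i : Fin (n - 1), s i = u * linL2Gen n i * u⁻¹) ∨
      (∃ u : Equiv.Perm (Fin (2 * n)), ∀ i : Fin (n - 1), s i = u * linL3Gen n i * u⁻¹) := by
  let Q : ℕ → Bool → Fin (2*n) := fun j b => P j (xor b j.bodd)
  have hQ : ∀ j k b c, j < n → k < n → Q j b = Q k c → j = k ∧ b = c := by
    intro j k b c hj hk e
    obtain ⟨e1, e2⟩ := hP _ _ _ _ hj hk e
    subst e1
    refine ⟨rfl, ?_⟩
    revert e2
    cases b <;> cases c <;> simp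
  have q1 : ∀ i (hi : i < n - 1) j b, j < n → j ≠ i → j ≠ i + 1 → s ⟨i, hi⟩ (Q j b) = Q j (xor b τ) := by
    intro i hi j b a c d
    simp only [Q]
    rw [h1 i hi j _ a c d]
    congr 1
    cases b <;> cases τ <;> cases j.bodd <;> rfl
  have q2 : ∀ i (hi : i < n - 1) b, s ⟨i, hi⟩ (Q i b) = Q (i+1) (!b) := by
    intro i hi b
    simp only [Q]
    rw [h2, Nat.bodd_succ]
    congr 1
    cases b <;> cases i.bodd <;> rfl
  have q3 : ∀ i (hi : i < n - 1) b, s ⟨i, hi⟩ (Q (i+1) b) = Q i (xor b (!ε)) := by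
    intro i hi b
    simp only [Q]
    rw [h3, Nat.bodd_succ]
    congr 1
    cases b <;> cases ε <;> cases i.bodd <;> rfl
  cases τ
  · simp only [Bool.xor_false] at h1 q1
    cases ε
    · simp only [Bool.xor_false] at h3
      left
      refine mk_conj P hP _ _ ?_
      rintro ⟨i, hi⟩ j hj b
      have hd : dbl n (stdGen n ⟨i, hi⟩) (stdGen n ⟨i, hi⟩) (lab n j hj b) =
          lab n (stdGen n ⟨i, hi⟩ ⟨j, hj⟩).val (stdGen n ⟨i, hi⟩ ⟨j, hj⟩).isLt b := by
        cases b
        · exact dbl_f _ _ _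
        · exact dbl_t _ _ _
      refine ⟨_, _, _, hd, ?_⟩
      by_cases c1 : j = i
      · subst c1; rw [std_a hi, h2]
      by_cases c2 : j = i + 1
      · subst c2; rw [std_b hi, h3]
      · rw [std_c hi hj c1 c2, h1 i hi j b hj c1 c2]
    · simp only [Bool.not_true, Bool.xor_false] at q3
      right; left
      refine mk_conj Q hQ _ _ ?_
      rintro ⟨i, hi⟩ j hj b
      by_cases c1 : j = i
      · subst c1; exact ⟨_, _, _, L1_a hi b, q2 _ hi b⟩
      by_cases c2 : j = i + 1
      · subst c2; exact ⟨_, _, _, L1_b hi b, q3 _ hi b⟩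
      · exact ⟨_, _, _, L1_c hi hj c1 c2 b, q1 i hi j b hj c1 c2⟩
  · have low : ∀ i (hi : i < n - 1) j (hj : j < n) b, i ≤ j → lowTw n ⟨i, hi⟩ (lab n j hj b) = lab n j hj b := by
      intro i hi j hj b hh
      rw [lowTw_lab, if_neg (by simp; omega)]
    have high : ∀ i (hi : i < n - 1) j (hj : j < n) b, j < i + 2 → highTw n ⟨i, hi⟩ (lab n j hj b) = lab n j hj b := by
      intro i hi j hj b hh
      rw [highTw_lab, if_neg (by simp; omega)]
    have gen : ∀ (m : Fin (n-1) → Perm (Fin (2*n))) (e : Bool),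
        (∀ i (hi : i < n-1) b, m ⟨i, hi⟩ (lab n i (by omega) b) = lab n (i+1) (by omega) (!b)) →
        (∀ i (hi : i < n-1) b, m ⟨i, hi⟩ (lab n (i+1) (by omega) b) = lab n i (by omega) (xor b (!e))) →
        (∀ i (hi : i < n-1) j (hj : j < n) b, j ≠ i → j ≠ i + 1 → m ⟨i, hi⟩ (lab n j hj b) = lab n j hj b) →
        e = ε →
        ∃ u : Equiv.Perm (Fin (2 * n)), ∀ i : Fin (n - 1), s i = u * (lowTw n i * m i * highTw n i) * u⁻¹ := by
      rintro m e m1 m2 m3 rfl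
      refine mk_conj Q hQ _ (fun i => lowTw n i * m i * highTw n i) ?_
      rintro ⟨i, hi⟩ j hj b
      simp only [Perm.mul_apply]
      by_cases c1 : j = i
      · subst c1
        exact ⟨_, _, _, by rw [high _ hi _ _ _ (by omega), m1, low _ hi _ _ _ (by omega)], q2 _ hi b⟩
      by_cases c2 : j = i + 1
      · subst c2
        exact ⟨_, _, _, by rw [high _ hi _ _ _ (by omega), m2, low _ hi _ _ _ (by omega)], q3 _ hi b⟩
      · refine ⟨_, hj, _, ?_, q1 i hi j b hj c1 c2⟩
        rw [highTw_lab, m3 _ hi _ _ _ c1 c2, lowTw_lab]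
        congr 1
        rcases lt_or_ge j i with c | c
        · rw [if_pos (by simpa using c), if_neg (by simp; omega)]; simp
        · rw [if_neg (by simp; omega), if_pos (by simp; omega)]; simp
    cases ε
    · right; right; right
      exact gen (mid3 n) false (fun i hi b => L3_a hi b) (fun i hi b => by rw [L3_b hi b]; simp)
        (fun i hi j hj b c d => L3_c hi hj c d b) rfl
    · right; right; left
      exact gen (linL1Gen n) true (fun i hi b => L1_a hi b) (fun i hi b => by rw [L1_b hi b]; simp)
        (fun i hi j hj b c d => L1_c hi hj c d b) rfl
end Final


theorem hom_to_sym2n_classification (n : ℕ) (hn : 7 ≤ n)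
    (ψ : BraidGroup n →* Equiv.Perm (Fin (2 * n))) :
    IsCyclicHom ψ ∨
      (∃ u : Equiv.Perm (Fin (2 * n)), ∃ w : Equiv.Perm (Fin n),
        ∀ i : Fin (n - 1), ψ (σ i) = u * dbl n (stdGen n i) w * u⁻¹) ∨
      (∃ u : Equiv.Perm (Fin (2 * n)),
        ∀ i : Fin (n - 1), ψ (σ i) = u * dbl n (stdGen n i) (stdGen n i) * u⁻¹) ∨
      (∃ u : Equiv.Perm (Fin (2 * n)), ∀ i : Fin (n - 1), ψ (σ i) = u * linL1Gen n i * u⁻¹) ∨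
      (∃ u : Equiv.Perm (Fin (2 * n)), ∀ i : Fin (n - 1), ψ (σ i) = u * linL2Gen n i * u⁻¹) ∨
      (∃ u : Equiv.Perm (Fin (2 * n)), ∀ i : Fin (n - 1), ψ (σ i) = u * linL3Gen n i * u⁻¹) := by
  classical
  have : NeZero n := ⟨by omega⟩
  let s : ℕ → Equiv.Perm (Fin (2*n)) := fun k => if hk : k < n - 1 then ψ (σ ⟨k, hk⟩) else 1
  have hs : ∀ k (hk : k < n - 1), s k = ψ (σ ⟨k, hk⟩) := fun k hk => dif_pos hk
  have hBr : Br (n-1) s := by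
    constructor
    · intro i j hij hj
      rw [hs i (by omega), hs j hj, ← map_mul, ← map_mul]
      congr 1
      have : PresentedGroup.mk (braidRels n) _ = 1 := PresentedGroup.one_of_mem
        (Or.inl ⟨(⟨i, by omega⟩ : Fin (n-1)), (⟨j, hj⟩ : Fin (n-1)), Or.inl hij, rfl⟩)
      rw [map_mul, map_inv, mul_inv_eq_one] at this
      exact this
    · intro i hi
      rw [hs i (by omega), hs (i+1) hi, ← map_mul, ← map_mul, ← map_mul, ← map_mul]
      congr 1
      have : PresentedGroup.mk (braidRels n) _ = 1 := PresentedGroup.one_of_mem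
        (Or.inr ⟨(⟨i, by omega⟩ : Fin (n-1)), (⟨i+1, hi⟩ : Fin (n-1)), rfl, rfl⟩)
      rw [map_mul, map_inv, mul_inv_eq_one] at this
      exact this
  obtain ⟨S, hC, hSs⟩ := circ_exists hn hBr
  have hψ : ∀ i (hi : i < n - 1), ψ (σ ⟨i, hi⟩) = S (i : ℕ) := fun i hi => by rw [hSs i hi, hs i hi]
  rcases trich hn (by simp) hC with hA | ⟨p, p1, p2, p3, p4⟩ | ⟨P, τ, ε, h0, h1, h2, h3⟩
  · left
    rintro ⟨i, hi⟩ ⟨j, hj⟩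
    rw [hψ i hi, hψ j hj]
    exact Equiv.ext (fun x => hA x _ _)
  · right; left
    let c : Fin n ≃ {x // CC S x} := Fintype.equivOfCardEq (by
      rw [← Nat.card_eq_fintype_card (α := {x // CC S x}), p4, Fintype.card_fin])
    let t : Equiv.Perm {x // CC S x} := (S 0).subtypePerm (fun x => CC_iff hn hC 0 x)
    let w : Equiv.Perm (Fin n) := c.symm.permCongr t
    have hw : ∀ j, (c (w j)).1 = S 0 (c j).1 := by
      intro j
      simp [w, t, Equiv.permCongr_apply]
    let Q : ℕ → Bool → Fin (2*n) := fun j b => if b then (if hj : j < n then (c ⟨j, hj⟩).1 else p 0) else p (j : ℕ)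
    have Qf : ∀ j, Q j false = p (j : ℕ) := fun j => rfl
    have Qt : ∀ j hj, Q j true = (c ⟨j, hj⟩).1 := fun j hj => dif_pos hj
    have key := mk_conj Q ?_ (fun i => ψ (σ i)) (fun i => dbl n (stdGen n i) w) ?_
    · obtain ⟨u, hu⟩ := key
      exact ⟨u, w, hu⟩
    · intro j k b d hj hk e
      cases b <;> cases d
      · rw [Qf, Qf] at e
        exact ⟨zcast_inj hj hk (p1 e), rfl⟩
      · rw [Qf, Qt k hk] at e
        exact absurd (c ⟨k, hk⟩).2 (e ▸ p2 _)
      · rw [Qf, Qt j hj] at e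
        exact absurd (c ⟨j, hj⟩).2 (e ▸ p2 _)
      · rw [Qt j hj, Qt k hk] at e
        have := c.injective (Subtype.ext e)
        exact ⟨congrArg Fin.val this, rfl⟩
    · rintro ⟨i, hi⟩ j hj b
      simp only [hψ i hi]
      cases b
      · refine ⟨_, (stdGen n ⟨i, hi⟩ ⟨j, hj⟩).isLt, _, dbl_f hj _ _, ?_⟩
        rw [Qf, Qf, p3]
        congr 1
        by_cases c1 : j = i
        · subst c1; rw [std_a hi, Equiv.swap_apply_left]; push_cast; rfl
        by_cases c2 : j = i + 1
        · subst c2; rw [std_b hi]; push_cast; rw [Equiv.swap_apply_right]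
        · rw [std_c hi hj c1 c2, Equiv.swap_apply_of_ne_of_ne]
          · exact fun e => c1 (zcast_inj hj (by omega) e)
          · intro e
            exact c2 (zcast_inj (n := n) hj (by omega) (by push_cast; exact e))
      · refine ⟨_, (w ⟨j, hj⟩).isLt, _, dbl_t hj _ _, ?_⟩
        rw [Qt j hj, Qt _ (w ⟨j, hj⟩).isLt]
        have := hw ⟨j, hj⟩
        exact ((c ⟨j, hj⟩).2 _ _).trans this.symm
  · right; right
    refine conc2 P τ ε (fun i => ψ (σ i)) h0 ?_ ?_ ?_
    · intro i hi j b a d e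
      simp only [hψ i hi]
      exact h1 i j b (by omega) a d e
    · intro i hi b
      simp only [hψ i hi]
      exact h2 i b (by omega)
    · intro i hi b
      simp only [hψ i hi]
      exact h3 i b (by omega)
end

section
/- Let ρ ≥ 3 be an integer. Let G be a perfect group containing elements t_0, t_1, …, t_{2ρ+1} such that: (i) t_i t_j = t_j t_i for all 1 ≤ i, j ≤ 2ρ+1 with |i−j| ≥ 2; (ii) t_i t_{i+1} t_i = t_{i+1} t_i t_{i+1} for all 1 ≤ i ≤ 2ρ; (iii) t_0 t_i = t_i t_0 for all 1 ≤ i ≤ 2ρ+1 with i ≠ 4; (iv) t_0 t_4 t_0 = t_4 t_0 t_4; (v) G is generated by t_0, t_1, …, t_{2ρ}. If H is any group and φ : G → H is a homomorphism with φ(t_1) = φ(t_2) = … = φ(t_{2ρ+1}), then φ is trivial. -/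
/-- Case 1 of the proof of Theorem 1. Let `ρ ≥ 3` and let `G` be a
perfect group containing elements `t 0, …, t (2ρ+1)` satisfying the braid/commutation
relations of the Humphries–Dehn twist generators of the mapping class group, and
generated by `t 0, …, t (2ρ)`. If `H` is any group and `φ : G → H` is a homomorphism
with `φ (t 1) = φ (t 2) = ⋯ = φ (t (2ρ+1))`, then `φ` is trivial. -/
theorem mcg_cyclic_hom_trivial (ρ : ℕ) (hρ : 3 ≤ ρ) (G : Type*) [Group G] (t : ℕ → G)
    (hperfect : commutator G = ⊤)
    (hcomm : ∀ i j : ℕ, 1 ≤ i → i ≤ 2 * ρ + 1 → 1 ≤ j → j ≤ 2 * ρ + 1 →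
      (i + 2 ≤ j ∨ j + 2 ≤ i) → t i * t j = t j * t i)
    (hbraid : ∀ i : ℕ, 1 ≤ i → i ≤ 2 * ρ →
      t i * t (i + 1) * t i = t (i + 1) * t i * t (i + 1))
    (hcomm0 : ∀ i : ℕ, 1 ≤ i → i ≤ 2 * ρ + 1 → i ≠ 4 → t 0 * t i = t i * t 0)
    (hbraid0 : t 0 * t 4 * t 0 = t 4 * t 0 * t 4)
    (hgen : Subgroup.closure (t '' {i : ℕ | i ≤ 2 * ρ}) = ⊤)
    (H : Type*) [Group H] (φ : G →* H)
    (hcyc : ∀ i : ℕ, 1 ≤ i → i ≤ 2 * ρ + 1 → φ (t i) = φ (t 1)) :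
    ∀ g : G, φ g = 1 := by
  have h4 : φ (t 4) = φ (t 1) := hcyc 4 (by omega) (by omega)
  have hc : φ (t 0) * φ (t 1) = φ (t 1) * φ (t 0) := by
    rw [← map_mul, hcomm0 1 le_rfl (by omega) (by norm_num), map_mul]
  have hb : φ (t 0) * φ (t 1) * φ (t 0) = φ (t 1) * φ (t 0) * φ (t 1) := by
    have := congrArg φ hbraid0
    simpa only [map_mul, h4] using this
  have h0 : φ (t 0) = φ (t 1) := by
    rw [hc] at hb
    exact mul_left_cancel hb
  have hz : ∀ g : G, φ g ∈ Subgroup.zpowers (φ (t 1)) := by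
    have hle : Subgroup.closure (t '' {i : ℕ | i ≤ 2 * ρ}) ≤
        (Subgroup.zpowers (φ (t 1))).comap φ := by
      rw [Subgroup.closure_le]
      rintro _ ⟨i, hi, rfl⟩
      have hi' : i ≤ 2 * ρ := hi
      have : φ (t i) = φ (t 1) := by
        rcases Nat.eq_zero_or_pos i with rfl | hp
        · exact h0
        · exact hcyc i hp (by omega)
      change φ (t i) ∈ Subgroup.zpowers (φ (t 1))
      rw [this]
      exact Subgroup.mem_zpowers _
    intro g
    rw [hgen] at hle
    exact hle (Subgroup.mem_top g)
  have hk : commutator G ≤ φ.ker := by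
    rw [commutator_def, Subgroup.commutator_le]
    intro x _ y _
    rw [MonoidHom.mem_ker, map_commutatorElement, commutatorElement_eq_one_iff_mul_comm]
    obtain ⟨m, hm⟩ := hz x
    obtain ⟨n, hn⟩ := hz y
    rw [← hm, ← hn]
    exact (Commute.refl (φ (t 1))).zpow_zpow m n
  intro g
  rw [hperfect] at hk
  exact hk (Subgroup.mem_top g)
end

section
/- Let n ≥ 7 and let w ∈ Sym_n. Define w_0 ∈ Sym_{2n} by w_0(i) = i for 1 ≤ i ≤ n and w_0(n+i) = n + w(i) for 1 ≤ i ≤ n. Then there is no permutation u_0 ∈ Sym_{2n} such that u_0 commutes with (i, i+1)·w_0 for every 1 ≤ i ≤ n−1 with i ≠ 4, and u_0 v u_0 = v u_0 v where v = (4, 5)·w_0. -/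
theorem swap_aux {m : ℕ} (a b c d y : Fin m) (h1 : a.val < b.val) (h2 : c.val < d.val)
    (h3 : a.val < c.val) (h4 : b.val < d.val)
    (hy : y = a ∨ y = b ∨ y = c ∨ y = d)
    (h : Equiv.swap a b (Equiv.swap c d y) = y) : False := by
  have h' : Equiv.swap c d y = Equiv.swap a b y := by
    conv_rhs => rw [← h]
    simp
  clear h
  simp only [Equiv.swap_apply_def] at h'
  simp only [Fin.ext_iff] at hy
  split_ifs at h' <;> simp only [Fin.ext_iff] at * <;> omega

/-- Case 2 of the proof of Theorem 1. Let `n ≥ 7`, `w ∈ Sym_n`, and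
let `w₀ ∈ Sym_{2n}` be `w₀(i) = i` for `1 ≤ i ≤ n`, `w₀(n+i) = n + w(i)` (1-based; here
realized 0-based as `dbl n 1 w`). Then there is no `u₀ ∈ Sym_{2n}` commuting with
`(i, i+1)·w₀` for every `1 ≤ i ≤ n-1` with `i ≠ 4` and satisfying `u₀ v u₀ = v u₀ v`,
where `v = (4, 5)·w₀` (1-based points; 0-based these are `(i-1, i)` and `(3, 4)`). -/
theorem case2_no_u0 (n : ℕ) (hn : 7 ≤ n) (w : Equiv.Perm (Fin n)) :
    ¬ ∃ u0 : Equiv.Perm (Fin (2 * n)),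
      (∀ (i : ℕ) (_h1 : 1 ≤ i) (_h2 : i ≤ n - 1), i ≠ 4 →
        Commute u0
          (Equiv.swap (⟨i - 1, by omega⟩ : Fin (2 * n)) ⟨i, by omega⟩ * dbl n 1 w)) ∧
      u0 * (Equiv.swap (⟨3, by omega⟩ : Fin (2 * n)) ⟨4, by omega⟩ * dbl n 1 w) * u0 =
        (Equiv.swap (⟨3, by omega⟩ : Fin (2 * n)) ⟨4, by omega⟩ * dbl n 1 w) * u0 *
          (Equiv.swap (⟨3, by omega⟩ : Fin (2 * n)) ⟨4, by omega⟩ * dbl n 1 w) := by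
  rintro ⟨u, hc, hb⟩
  have hw : ∀ k (hk : k < n), dbl n 1 w (⟨k, by omega⟩ : Fin (2 * n)) = ⟨k, by omega⟩ := by
    intro k hk
    have e : (⟨k, by omega⟩ : Fin (2 * n)) =
        (finSumFinEquiv.trans (finCongr (two_mul n).symm)) (Sum.inl ⟨k, hk⟩) := by
      ext; simp
    rw [e, dbl, Equiv.permCongr_apply, Equiv.symm_apply_apply]
    simp
  generalize dbl n 1 w = W at *
  have key : ∀ (i j : ℕ) (h1 : 1 ≤ i) (h2 : i ≤ n - 1) (h3 : 1 ≤ j) (h4 : j ≤ n - 1),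
      i ≠ 4 → j ≠ 4 → ∀ y : Fin (2 * n),
      u (Equiv.swap (⟨i - 1, by omega⟩ : Fin (2 * n)) ⟨i, by omega⟩
        (Equiv.swap (⟨j - 1, by omega⟩ : Fin (2 * n)) ⟨j, by omega⟩ y)) =
      Equiv.swap (⟨i - 1, by omega⟩ : Fin (2 * n)) ⟨i, by omega⟩
        (Equiv.swap (⟨j - 1, by omega⟩ : Fin (2 * n)) ⟨j, by omega⟩ (u y)) := by
    intro i j h1 h2 h3 h4 hi hj y
    have a := hc i h1 h2 hi
    have b := hc j h3 h4 hj
    have c := a.mul_right b.inv_right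
    have d := congrArg (fun f : Equiv.Perm (Fin (2 * n)) => f y) c.eq
    simpa [mul_assoc] using d
  have mv : ∀ (i j : ℕ) (h1 : 1 ≤ i) (h2 : i ≤ n - 1) (h3 : 1 ≤ j) (h4 : j ≤ n - 1),
      i ≠ 4 → j ≠ 4 → i < j → ∀ y : Fin (2 * n),
      (y.val = i - 1 ∨ y.val = i ∨ y.val = j - 1 ∨ y.val = j) →
      ((u y).val = i - 1 ∨ (u y).val = i ∨ (u y).val = j - 1 ∨ (u y).val = j) := by
    intro i j h1 h2 h3 h4 hi hj hij y hy
    by_contra hcon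
    have k := key i j h1 h2 h3 h4 hi hj y
    rw [Equiv.swap_apply_of_ne_of_ne (x := u y) (by simp [Fin.ext_iff]; omega)
      (by simp [Fin.ext_iff]; omega), Equiv.swap_apply_of_ne_of_ne (x := u y)
      (by simp [Fin.ext_iff]; omega) (by simp [Fin.ext_iff]; omega)] at k
    have k2 := u.injective k
    exact swap_aux _ _ _ _ y (by simp; omega) (by simp; omega) (by simp; omega) (by simp; omega)
      (by simpa [Fin.ext_iff] using hy) k2
  have f2 : u ⟨2, by omega⟩ = ⟨2, by omega⟩ := by
    have a := mv 3 6 (by omega) (by omega) (by omega) (by omega) (by omega) (by omega)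
      (by omega) ⟨2, by omega⟩ (by simp)
    have b := mv 2 5 (by omega) (by omega) (by omega) (by omega) (by omega) (by omega)
      (by omega) ⟨2, by omega⟩ (by simp)
    have c := mv 2 6 (by omega) (by omega) (by omega) (by omega) (by omega) (by omega)
      (by omega) ⟨2, by omega⟩ (by simp)
    have d := mv 2 3 (by omega) (by omega) (by omega) (by omega) (by omega) (by omega)
      (by omega) ⟨2, by omega⟩ (by simp)
    apply Fin.ext
    simp only
    omega
  have f5 : u ⟨5, by omega⟩ = ⟨5, by omega⟩ := by
    have a := mv 1 5 (by omega) (by omega) (by omega) (by omega) (by omega) (by omega)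
      (by omega) ⟨5, by omega⟩ (by simp)
    have b := mv 2 6 (by omega) (by omega) (by omega) (by omega) (by omega) (by omega)
      (by omega) ⟨5, by omega⟩ (by simp)
    have c := mv 3 6 (by omega) (by omega) (by omega) (by omega) (by omega) (by omega)
      (by omega) ⟨5, by omega⟩ (by simp)
    apply Fin.ext
    simp only
    omega
  have f3 : u ⟨3, by omega⟩ = ⟨3, by omega⟩ := by
    have k := key 3 6 (by omega) (by omega) (by omega) (by omega) (by omega) (by omega)
      ⟨2, by omega⟩
    rw [f2] at k
    simpa [Equiv.swap_apply_def] using k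
  have f4 : u ⟨4, by omega⟩ = ⟨4, by omega⟩ := by
    have k := key 5 1 (by omega) (by omega) (by omega) (by omega) (by omega) (by omega)
      ⟨5, by omega⟩
    rw [f5] at k
    simpa [Equiv.swap_apply_def] using k
  have e := congrArg (fun f : Equiv.Perm (Fin (2 * n)) => f ⟨3, by omega⟩) hb
  simp [Equiv.Perm.mul_apply, f3, f4, hw 3 (by omega), hw 4 (by omega)] at e
end

section
/- Let n ≥ 7. For 1 ≤ i ≤ n−1 define v_i = ∏_{j=1}^{i−1}(j, n+j) · (i, n+i+1)(i+1, n+i) · ∏_{j=i+2}^{n}(j, n+j) ∈ Sym_{2n}. If u_0 ∈ Sym_{2n} is a product of n transpositions with pairwise disjoint supports and u_0 commutes with v_i for every 1 ≤ i ≤ n−1 with i ≠ 4, then u_0 = ∏_{j=1}^{n}(j, n+j). -/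
/-- `u` is a product of `n` transpositions with pairwise disjoint supports. -/
def IsProdOfDisjointTranspositions (n : ℕ) (u : Equiv.Perm (Fin (2 * n))) : Prop :=
  ∃ a b : Fin n → Fin (2 * n),
    Function.Injective a ∧ Function.Injective b ∧ (∀ j k : Fin n, a j ≠ b k) ∧
    u = ((List.finRange n).map (fun j : Fin n => Equiv.swap (a j) (b j))).prod

theorem aux_list {n : ℕ} (a b : Fin n → Fin (2 * n)) (ha : Function.Injective a)
    (hb : Function.Injective b) (hab : ∀ j k : Fin n, a j ≠ b k) (p : Fin n → Prop)
    [DecidablePred p] (j : Fin n) (l : List (Fin n)) (hl : l.Nodup) :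
    ((l.map (fun k => if p k then Equiv.swap (a k) (b k) else 1)).prod (a j)
      = if j ∈ l ∧ p j then b j else a j) ∧
    ((l.map (fun k => if p k then Equiv.swap (a k) (b k) else 1)).prod (b j)
      = if j ∈ l ∧ p j then a j else b j) := by
  induction l with
  | nil => simp
  | cons k l ih =>
    rw [List.nodup_cons] at hl
    obtain ⟨h1, h2⟩ := ih hl.2
    simp only [List.map_cons, List.prod_cons, Equiv.Perm.mul_apply, h1, h2, List.mem_cons]
    by_cases hjk : j = k
    · subst hjk
      by_cases hp : p j <;> simp [hl.1, hp]
    · have e1 : Equiv.swap (a k) (b k) (a j) = a j :=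
        Equiv.swap_apply_of_ne_of_ne (fun h => hjk (ha h)) (hab j k)
      have e2 : Equiv.swap (a k) (b k) (b j) = b j :=
        Equiv.swap_apply_of_ne_of_ne (fun h => hab k j h.symm) (fun h => hjk (hb h))
      by_cases hp : p k <;> by_cases hq : j ∈ l ∧ p j <;> simp [hp, hq, hjk, e1, e2]

theorem aux_tw {n : ℕ} (p : Fin n → Prop) [DecidablePred p] (j : Fin n)
    (x : Fin (2 * n)) :
    ((x : ℕ) = j → ((((List.finRange n).map (fun k => if p k then tw n k else 1)).prod x :
      Fin (2 * n)) : ℕ) = if p j then n + j else j) ∧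
    ((x : ℕ) = n + j → ((((List.finRange n).map (fun k => if p k then tw n k else 1)).prod x :
      Fin (2 * n)) : ℕ) = if p j then (j : ℕ) else n + j) := by
  have := aux_list (fun j : Fin n => (⟨j, by have := j.isLt; omega⟩ : Fin (2 * n)))
    (fun j : Fin n => (⟨n + j, by have := j.isLt; omega⟩ : Fin (2 * n)))
    (fun i j h => by simpa [Fin.ext_iff] using h)
    (fun i j h => by simpa [Fin.ext_iff] using h)
    (fun i j h => by have := Fin.ext_iff.1 h; simp at this; omega) p j (List.finRange n)
    (List.nodup_finRange n)
  obtain ⟨h1, h2⟩ := this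
  constructor
  · intro hx
    have : x = ⟨j, by have := j.isLt; omega⟩ := Fin.ext hx
    rw [this]
    have := congrArg Fin.val h1
    simp only [List.mem_finRange, true_and] at this
    unfold tw
    rw [this]
    split_ifs <;> rfl
  · intro hx
    have : x = ⟨n + j, by have := j.isLt; omega⟩ := Fin.ext hx
    rw [this]
    have := congrArg Fin.val h2
    simp only [List.mem_finRange, true_and] at this
    unfold tw
    rw [this]
    split_ifs <;> rfl

def flp (n x : ℕ) : ℕ := if x < n then n + x else x - n
def ltr (n x : ℕ) : ℕ := if x < n then x else x - n

theorem aux_tw' {n : ℕ} (p : ℕ → Prop) [DecidablePred p] (x : Fin (2 * n)) :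
    ((((List.finRange n).map (fun k : Fin n => if p k then tw n k else 1)).prod x :
      Fin (2 * n)) : ℕ) = if p (ltr n x) then flp n x else x := by
  have hx := x.isLt
  by_cases h : (x : ℕ) < n
  · have := (aux_tw (fun k : Fin n => p k) ⟨x, h⟩ x).1 rfl
    rw [this]; simp [ltr, flp, h]
  · have := (aux_tw (fun k : Fin n => p k) ⟨x - n, by omega⟩ x).2 (by simp; omega)
    rw [this]
    have : n + (x - n : ℕ) = x := by omega
    simp [ltr, flp, h, this]

theorem swap_val {m : ℕ} (a b x : Fin m) :
    (Equiv.swap a b x : ℕ) = if (x : ℕ) = a then (b : ℕ) else if (x : ℕ) = b then a else x := by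
  rw [Equiv.swap_apply_def]
  simp only [Fin.ext_iff]
  split_ifs <;> rfl

def vv (n i x : ℕ) : ℕ :=
  if x = i then n + i + 1 else if x = i + 1 then n + i else
  if x = n + i then i + 1 else if x = n + i + 1 then i else flp n x

theorem flp_spec (n x : ℕ) : (x < n ∧ flp n x = n + x) ∨ (n ≤ x ∧ flp n x + n = x) := by
  unfold flp
  split_ifs <;> omega

theorem ltr_spec (n x : ℕ) : (x < n ∧ ltr n x = x) ∨ (n ≤ x ∧ ltr n x + n = x) := by
  unfold ltr
  split_ifs <;> omega

theorem vv_spec (n i x : ℕ) : (x = i ∧ vv n i x = n + i + 1) ∨ (x = i + 1 ∧ vv n i x = n + i) ∨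
    (x ≠ i ∧ x ≠ i + 1 ∧ x = n + i ∧ vv n i x = i + 1) ∨
    (x ≠ i ∧ x ≠ i + 1 ∧ x = n + i + 1 ∧ vv n i x = i) ∨
    (x ≠ i ∧ x ≠ i + 1 ∧ x ≠ n + i ∧ x ≠ n + i + 1 ∧ x < n ∧ vv n i x = n + x) ∨
    (x ≠ i ∧ x ≠ i + 1 ∧ x ≠ n + i ∧ x ≠ n + i + 1 ∧ n ≤ x ∧ vv n i x + n = x) := by
  unfold vv flp
  split_ifs <;> omega

theorem v_val {n : ℕ} (i : Fin (n - 1)) (x : Fin (2 * n)) :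
    (linL3Gen n i x : ℕ) = vv n i x := by
  have hx := x.isLt
  have hi := i.isLt
  unfold linL3Gen lowTw highTw
  simp only [Equiv.Perm.mul_apply]
  rw [aux_tw' (fun k => k < (i : ℕ))]
  simp only [swap_val]
  rw [aux_tw' (fun k => (i : ℕ) + 2 ≤ k)]
  generalize (i : ℕ) = i at *
  generalize (x : ℕ) = x at *
  generalize hy : (if i + 2 ≤ ltr n x then flp n x else x) = y
  generalize hz : (if y = i + 1 then n + i else if y = n + i then i + 1 else y) = z
  generalize hw : (if z = i then n + i + 1 else if z = n + i + 1 then i else z) = w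
  have hy' : (x < n ∧ i + 2 ≤ x ∧ y = n + x) ∨ (n + i + 2 ≤ x ∧ y + n = x) ∨
      (x < n ∧ x < i + 2 ∧ y = x) ∨ (n ≤ x ∧ x < n + i + 2 ∧ y = x) := by
    unfold flp ltr at hy
    by_cases h : x < n
    · rw [if_pos h, if_pos h] at hy
      split_ifs at hy <;> omega
    · rw [if_neg h, if_neg h] at hy
      split_ifs at hy <;> omega
  have hz' : (y = i + 1 ∧ z = n + i) ∨ (y = n + i ∧ z = i + 1) ∨
      (y ≠ i + 1 ∧ y ≠ n + i ∧ z = y) := by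
    split_ifs at hz <;> omega
  have hw' : (z = i ∧ w = n + i + 1) ∨ (z = n + i + 1 ∧ w = i) ∨
      (z ≠ i ∧ z ≠ n + i + 1 ∧ w = z) := by
    split_ifs at hw <;> omega
  have hf := flp_spec n w
  have hl := ltr_spec n w
  have hv := vv_spec n i x
  clear hy hz hw
  rcases hy' with h | h | h | h <;> rcases hz' with h' | h' | h' <;>
    rcases hw' with h'' | h'' | h'' <;> split_ifs <;> omega

theorem aux_move {n : ℕ} (u : Equiv.Perm (Fin (2 * n)))
    (hu : IsProdOfDisjointTranspositions n u) (x : Fin (2 * n)) : u x ≠ x := by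
  obtain ⟨a, b, ha, hb, hab, rfl⟩ := hu
  have hinj : Function.Injective (Sum.elim a b) := ha.sumElim hb hab
  have hs : Function.Surjective (Sum.elim a b) :=
    ((Fintype.bijective_iff_injective_and_card _).2 ⟨hinj, by simp; omega⟩).2
  obtain ⟨y, rfl⟩ := hs x
  rcases y with j | j
  · have := (aux_list a b ha hb hab (fun _ => True) j _ (List.nodup_finRange n)).1
    simp at this
    simp [this, (hab j j).symm]
  · have := (aux_list a b ha hb hab (fun _ => True) j _ (List.nodup_finRange n)).2
    simp at this
    simp [this, hab j j]

/-- letters `c` whose points are sent to points with the same letter -/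
theorem aux_sep {n : ℕ} (u : Equiv.Perm (Fin (2 * n))) (i j : Fin (n - 1))
    (hi : Commute u (linL3Gen n i)) (hj : Commute u (linL3Gen n j)) (x : Fin (2 * n))
    (h : linL3Gen n i (linL3Gen n j x) = x) :
    vv n i (vv n j (u x)) = u x := by
  have e : linL3Gen n i (linL3Gen n j (u x)) = u x := by
    have hi' := fun y => Equiv.congr_fun hi.eq y
    have hj' := fun y => Equiv.congr_fun hj.eq y
    simp only [Equiv.Perm.mul_apply] at hi' hj'
    rw [← hj', ← hi', h]
  have := congrArg Fin.val e
  rwa [v_val, v_val] at this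

theorem aux_vv {n : ℕ} (i j x : ℕ) (hi : i < n - 1) (hj : j < n - 1) (hx : x < 2 * n)
    (hij : i + 2 ≤ j ∨ j + 2 ≤ i)
    (h1 : ltr n x ≠ j) (h2 : ltr n x ≠ j + 1) :
    (vv n i (vv n j x) = x ↔ ltr n x ≠ i ∧ ltr n x ≠ i + 1) := by
  have e1 := vv_spec n j x
  have e2 := vv_spec n i (vv n j x)
  have e3 := ltr_spec n x
  generalize vv n i (vv n j x) = z at *
  generalize vv n j x = y at *
  rcases e3 with h | h <;> rcases e1 with h' | h' | h' | h' | h' | h' <;>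
    rcases e2 with k | k | k | k | k | k <;> omega

theorem aux_step {n : ℕ} (u : Equiv.Perm (Fin (2 * n)))
    (hmove : ∀ x, u x ≠ x) (c : ℕ) (hc : c < n)
    (hcomm : ∀ i : Fin (n - 1), (i : ℕ) ≠ 3 → Commute u (linL3Gen n i))
    (H : ∀ d, d < n → d ≠ c → ∃ i j, i < n - 1 ∧ j < n - 1 ∧ i ≠ 3 ∧ j ≠ 3 ∧
      (i + 2 ≤ j ∨ j + 2 ≤ i) ∧ c ≠ i ∧ c ≠ i + 1 ∧ c ≠ j ∧ c ≠ j + 1 ∧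
      (d = i ∨ d = i + 1)) (x : Fin (2 * n)) (hx : ltr n x = c) :
    (u x : ℕ) = flp n x := by
  have hxl := x.isLt
  have hul := (u x).isLt
  by_cases hd : ltr n (u x) = c
  · have := hmove x
    rw [Ne, Fin.ext_iff] at this
    generalize (u x : ℕ) = y at *
    generalize (x : ℕ) = x at *
    unfold ltr flp at *
    grind
  · exfalso
    obtain ⟨i, j, hi, hj, hi3, hj3, hij, h1, h2, h3, h4, h5⟩ :=
      H (ltr n (u x)) (by unfold ltr; split_ifs <;> omega) hd
    have := aux_sep u ⟨i, hi⟩ ⟨j, hj⟩ (hcomm _ hi3) (hcomm _ hj3) x (by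
      apply Fin.ext
      rw [v_val, v_val]
      exact (aux_vv i j x hi hj hxl hij (by omega) (by omega)).2 ⟨by omega, by omega⟩)
    have := (aux_vv i j (u x) hi hj hul hij (by omega) (by omega)).1 this
    omega

theorem aux_next {n : ℕ} (u : Equiv.Perm (Fin (2 * n))) (i : ℕ) (hi : i < n - 1)
    (hc : Commute u (linL3Gen n ⟨i, hi⟩))
    (h : ∀ x : Fin (2 * n), ltr n x = i → (u x : ℕ) = flp n x)
    (x : Fin (2 * n)) (hx : ltr n x = i + 1) : (u x : ℕ) = flp n x := by
  have hxl := x.isLt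
  have hc' := Equiv.congr_fun hc.eq (linL3Gen n ⟨i, hi⟩ x)
  simp only [Equiv.Perm.mul_apply] at hc'
  have e : linL3Gen n ⟨i, hi⟩ (linL3Gen n ⟨i, hi⟩ x) = x := by
    apply Fin.ext
    rw [v_val, v_val]
    simp only
    generalize (x : ℕ) = x at *
    unfold vv ltr flp at *
    grind
  rw [e] at hc'
  rw [hc', v_val, h, v_val]
  · simp only
    generalize (x : ℕ) = x at *
    unfold vv ltr flp at *
    grind
  · rw [v_val]
    simp only
    generalize (x : ℕ) = x at *
    unfold vv ltr flp at *
    grind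

/-- key step in Case 6 of the proof of Theorem 1. Let `n ≥ 7` and let
`v_i = ρ_{L3}(σ_i)`, `1 ≤ i ≤ n-1`. If `u₀ ∈ Sym_{2n}` is a product of `n`
transpositions with pairwise disjoint supports and commutes with `v_i` for every
`1 ≤ i ≤ n-1` with `i ≠ 4`, then `u₀ = ∏_{j=1}^{n}(j, n+j)`. (Here the generator of
1-based index `i` is `linL3Gen n ⟨i-1, _⟩`, so `i ≠ 4` reads `(i : ℕ) ≠ 3`.) -/
theorem case6_u0_determined (n : ℕ) (hn : 7 ≤ n) (u0 : Equiv.Perm (Fin (2 * n)))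
    (hu0 : IsProdOfDisjointTranspositions n u0)
    (hcomm : ∀ i : Fin (n - 1), (i : ℕ) ≠ 3 → Commute u0 (linL3Gen n i)) :
    u0 = ((List.finRange n).map (tw n)).prod := by
  have hmove := aux_move u0 hu0
  have key : ∀ c, c < n → ∀ x : Fin (2 * n), ltr n x = c → (u0 x : ℕ) = flp n x := by
    intro c
    induction c with
    | zero =>
      intro hc
      refine aux_step u0 hmove 0 hc hcomm ?_
      intro d hd hd0
      by_cases h4 : d < 4
      · exact ⟨max (d - 1) 1, 4, by omega, by omega, by omega, by omega, by omega, by omega,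
          by omega, by omega, by omega, by omega⟩
      · exact ⟨min d (n - 2), 1, by omega, by omega, by omega, by omega, by omega, by omega,
          by omega, by omega, by omega, by omega⟩
    | succ c ih =>
      intro hc
      by_cases h3 : c = 3
      · subst h3
        refine aux_step u0 hmove 4 hc hcomm ?_
        intro d hd hd0
        by_cases h4 : d < 4
        · exact ⟨min d 2, 5, by omega, by omega, by omega, by omega, by omega, by omega,
            by omega, by omega, by omega, by omega⟩
        · exact ⟨max (d - 1) 5, 0, by omega, by omega, by omega, by omega, by omega, by omega,
            by omega, by omega, by omega, by omega⟩
      · exact aux_next u0 c (by omega) (hcomm _ h3) (ih (by omega))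
  ext x
  have hx := x.isLt
  rw [key (ltr n x) (by unfold ltr; split_ifs <;> omega) x rfl]
  have := aux_tw' (fun _ => True) x
  simp only [if_true] at this
  exact this.symm
end
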